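/- Let a ∈ ℝ with |a| ≤ 1/2 and let b > π/2. Let Γ = ℤ(1,0) + ℤ(a,b) ⊂ ℝ², let ω : ℝ² → ℝ be smooth and Γ-periodic, let λ > 0, and let φ = (φ₁, φ₂) : ℝ² → ℂ² be smooth, not identically zero, satisfying the equivariance φ(p + (1,0)) = φ(p) and φ(p + (a,b)) = −φ(p) for all p ∈ ℝ², together with (∂ₓ − i∂_y)φ₂ = λ e^{ω} φ₁ and −(∂ₓ + i∂_y)φ₁ = λ e^{ω} φ₂ on ℝ². Then λ² · b · ∫₀¹∫₀¹ e^{2ω(s + ta, tb)} ds dt ≥ π²/b. (Theorem 4.4 for the non-trivial spin structure: every positive Dirac eigenvalue of a metric conformal to the flat metric, normalized by the square root of the area, is at least π/√b.) -/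

import Mathlib

/-!
Pair the eigenspinor `φ`, a solution of `Dφ = fφ` with `f = λe^ω`, with a plane wave `χ`
satisfying `Dχ = (π/b)χ`, of constant squared norm `δ`. The map `Z = (φ₁, φ̄₂, χ₁, χ̄₂)` to `ℂ⁴`
vanishes nowhere, has the antiperiodicity of `φ`, and satisfies `⟪Z, ∂̄Z⟫ = 0` and
`‖∂̄Z‖² = f²|φ|² + (π/b)²δ`, where `∂̄ = ∂ₓ + i∂_y`.

Along an antiperiodic line with connection holonomy `η`, a gauge change that spreads `η` evenly
turns `Z/‖Z‖` into a curve between antipodal points of the sphere, of squared speed `η²` plus the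
squared norm of the horizontal part of `Z'`; hence the horizontal energy of the line is at least
`π² - η²`. By the Cauchy–Riemann condition the connection form is the rotated gradient of
`½ log ‖Z‖²`, so that the mean of `η` over the parallel lines is zero. The derivative of `η` is an
integral of curvature, which the horizontal energy density controls, and the energy saved by
letting `η` oscillate is spent on the oscillation itself: the total horizontal energy of a cell is
still at least `π²`. Shearing the cell by an integer makes the cross term favourable, and then the
horizontal energy is at most `b² ∫ ‖∂̄Z‖²/‖Z‖²`, because `b² ≥ 2`.

As `δ → 0` the integrand tends to `f²` off the zeros of `φ`. These form a null set: the Laplacian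
of `log (|φ|² + δ)` is bounded below uniformly in `δ`, so the mean of this function over a circle
about a point where `φ ≠ 0` stays bounded below, while `log δ → -∞` on the zeros.
-/

/-- Partial derivative in the first coordinate direction of a map on `ℝ × ℝ`. -/
noncomputable def dX (f : ℝ × ℝ → ℂ) (p : ℝ × ℝ) : ℂ := fderiv ℝ f p (1, 0)

/-- Partial derivative in the second coordinate direction of a map on `ℝ × ℝ`. -/
noncomputable def dY (f : ℝ × ℝ → ℂ) (p : ℝ × ℝ) : ℂ := fderiv ℝ f p (0, 1)

open Set Filter Topology MeasureTheory Function
open scoped InnerProductSpace Real ComplexConjugate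

section SpherePath

lemma abs_arcsin_sub_arcsin_le_integral_of_abs_lt_one {g g' ℓ : ℝ → ℝ} {a b : ℝ} (hab : a ≤ b)
    (hg : ∀ t, HasDerivAt g (g' t) t) (hg' : Continuous g') (hℓ : Continuous ℓ)
    (hlt : ∀ t, |g t| < 1) (hbound : ∀ t, |g' t| ≤ ℓ t * √(1 - g t ^ 2)) :
    |Real.arcsin (g b) - Real.arcsin (g a)| ≤ ∫ t in a..b, ℓ t := by
  have hsqrt (t : ℝ) : 0 < √(1 - g t ^ 2) :=
    Real.sqrt_pos.2 (sub_pos.2 ((sq_lt_one_iff_abs_lt_one _).2 (hlt t)))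
  have hgc : Continuous g := continuous_iff_continuousAt.2 fun t ↦ (hg t).continuousAt
  have hderiv (t : ℝ) :
      HasDerivAt (fun t ↦ Real.arcsin (g t)) (1 / √(1 - g t ^ 2) * g' t) t :=
    (Real.hasDerivAt_arcsin (abs_lt.1 (hlt t)).1.ne' (abs_lt.1 (hlt t)).2.ne).comp t (hg t)
  have hcont : Continuous fun t ↦ 1 / √(1 - g t ^ 2) * g' t :=
    (continuous_const.div (by fun_prop) fun t ↦ (hsqrt t).ne').mul hg'
  rw [← intervalIntegral.integral_eq_sub_of_hasDerivAt (fun t _ ↦ hderiv t)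
    (hcont.intervalIntegrable a b), ← Real.norm_eq_abs]
  refine intervalIntegral.norm_integral_le_of_norm_le hab (ae_of_all _ fun t _ ↦ ?_)
    (hℓ.intervalIntegrable a b)
  rw [Real.norm_eq_abs, abs_mul, abs_of_pos (one_div_pos.2 (hsqrt t)), one_div,
    inv_mul_le_iff₀ (hsqrt t), mul_comm]
  exact hbound t

lemma abs_arcsin_sub_arcsin_le_integral {g g' ℓ : ℝ → ℝ} {a b : ℝ} (hab : a ≤ b)
    (hg : ∀ t, HasDerivAt g (g' t) t) (hg' : Continuous g') (hℓ : Continuous ℓ)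
    (hℓ0 : ∀ t, 0 ≤ ℓ t) (hle : ∀ t, |g t| ≤ 1)
    (hbound : ∀ t, |g' t| ≤ ℓ t * √(1 - g t ^ 2)) :
    |Real.arcsin (g b) - Real.arcsin (g a)| ≤ ∫ t in a..b, ℓ t := by
  have hscaled {κ : ℝ} (hκ : κ ∈ Ioo (0 : ℝ) 1) :
      |Real.arcsin (κ * g b) - Real.arcsin (κ * g a)| ≤ ∫ t in a..b, ℓ t := by
    refine abs_arcsin_sub_arcsin_le_integral_of_abs_lt_one (g := fun t ↦ κ * g t)
      hab (fun t ↦ (hg t).const_mul κ) (continuous_const.mul hg') hℓ (fun t ↦ ?_) fun t ↦ ?_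
    · rw [abs_mul, abs_of_pos hκ.1]
      exact (mul_le_of_le_one_right hκ.1.le (hle t)).trans_lt hκ.2
    · calc |κ * g' t| = κ * |g' t| := by rw [abs_mul, abs_of_pos hκ.1]
        _ ≤ κ * (ℓ t * √(1 - g t ^ 2)) := mul_le_mul_of_nonneg_left (hbound t) hκ.1.le
        _ = ℓ t * √(κ ^ 2 * (1 - g t ^ 2)) := by
          rw [Real.sqrt_mul (sq_nonneg κ), Real.sqrt_sq hκ.1.le]; ring
        _ ≤ ℓ t * √(1 - (κ * g t) ^ 2) := by
          refine mul_le_mul_of_nonneg_left (Real.sqrt_le_sqrt ?_) (hℓ0 t)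
          nlinarith [hκ.1, hκ.2]
  have hlim : Tendsto (fun κ : ℝ ↦ |Real.arcsin (κ * g b) - Real.arcsin (κ * g a)|) (𝓝[<] 1)
      (𝓝 |Real.arcsin (g b) - Real.arcsin (g a)|) := by
    have hcont : Continuous fun κ : ℝ ↦ |Real.arcsin (κ * g b) - Real.arcsin (κ * g a)| := by
      fun_prop
    simpa using (hcont.tendsto 1).mono_left nhdsWithin_le_nhds
  refine le_of_tendsto hlim ?_
  filter_upwards [Ioo_mem_nhdsLT (zero_lt_one' ℝ)] with κ hκ using hscaled hκ

variable {V : Type*} [NormedAddCommGroup V] [InnerProductSpace ℝ V]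

lemma real_inner_deriv_eq_zero_of_norm_eq_one {w : ℝ → V} {w' : V} {t : ℝ}
    (hw : HasDerivAt w w' t) (h1 : ∀ t, ‖w t‖ = 1) : ⟪w t, w'⟫_ℝ = 0 := by
  have hconst : HasDerivAt (‖w ·‖ ^ 2) 0 t := by
    simpa only [h1, Pi.pow_def, one_pow] using hasDerivAt_const t (1 : ℝ)
  linarith [hw.norm_sq.unique hconst]

lemma abs_real_inner_le_mul_sqrt_of_inner_eq_zero {u w x : V} (hu : ‖u‖ = 1) (hw : ‖w‖ = 1)
    (hx : ⟪w, x⟫_ℝ = 0) : |⟪u, x⟫_ℝ| ≤ ‖x‖ * √(1 - ⟪u, w⟫_ℝ ^ 2) := by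
  have hproj : ‖u - ⟪u, w⟫_ℝ • w‖ ^ 2 = 1 - ⟪u, w⟫_ℝ ^ 2 := by
    rw [norm_sub_sq_real, real_inner_smul_right, norm_smul, hu, hw, Real.norm_eq_abs, mul_one,
      sq_abs]
    ring
  calc |⟪u, x⟫_ℝ| = |⟪u - ⟪u, w⟫_ℝ • w, x⟫_ℝ| := by
        rw [inner_sub_left, real_inner_smul_left, hx, mul_zero, sub_zero]
    _ ≤ ‖u - ⟪u, w⟫_ℝ • w‖ * ‖x‖ := abs_real_inner_le_norm _ _
    _ = ‖x‖ * √(1 - ⟪u, w⟫_ℝ ^ 2) := by rw [← hproj, Real.sqrt_sq (norm_nonneg _), mul_comm]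

lemma angle_le_integral_norm_deriv {w w' : ℝ → V} {a b : ℝ} (hab : a ≤ b)
    (hw : ∀ t, HasDerivAt w (w' t) t) (hw' : Continuous w') (h1 : ∀ t, ‖w t‖ = 1) :
    InnerProductGeometry.angle (w a) (w b) ≤ ∫ t in a..b, ‖w' t‖ := by
  have hderiv (t : ℝ) : HasDerivAt (fun t ↦ ⟪w a, w t⟫_ℝ) ⟪w a, w' t⟫_ℝ t := by
    simpa using (hasDerivAt_const t (w a)).inner ℝ (hw t)
  have hlength := abs_arcsin_sub_arcsin_le_integral hab hderiv (by fun_prop) hw'.norm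
    (fun t ↦ norm_nonneg _) (fun t ↦ by simpa [h1] using abs_real_inner_le_norm (w a) (w t))
    fun t ↦ abs_real_inner_le_mul_sqrt_of_inner_eq_zero (h1 a) (h1 t)
      (real_inner_deriv_eq_zero_of_norm_eq_one (hw t) h1)
  rw [real_inner_self_eq_norm_sq, h1, one_pow, Real.arcsin_one, abs_sub_comm] at hlength
  rw [InnerProductGeometry.angle, h1, h1, mul_one, div_one, Real.arccos]
  exact (le_abs_self _).trans hlength

lemma sq_integral_le_integral_sq {f : ℝ → ℝ} (hf : Continuous f) :
    (∫ t in (0 : ℝ)..1, f t) ^ 2 ≤ ∫ t in (0 : ℝ)..1, f t ^ 2 := by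
  simp only [intervalIntegral.integral_of_le zero_le_one]
  have : IsProbabilityMeasure (volume.restrict (Ioc (0 : ℝ) 1)) := ⟨by simp⟩
  exact even_two.convexOn_pow.map_integral_le (by fun_prop) isClosed_univ (by simp)
    (hf.integrableOn_Ioc) ((hf.pow 2).integrableOn_Ioc)

lemma sq_pi_le_integral_norm_deriv_sq {w w' : ℝ → V} (hw : ∀ t, HasDerivAt w (w' t) t)
    (hw' : Continuous w') (h1 : ∀ t, ‖w t‖ = 1) (hanti : w 1 = -w 0) :
    π ^ 2 ≤ ∫ t in (0 : ℝ)..1, ‖w' t‖ ^ 2 := by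
  have hlength := angle_le_integral_norm_deriv zero_le_one hw hw' h1
  rw [hanti, InnerProductGeometry.angle_self_neg_of_nonzero
    (norm_ne_zero_iff.1 (by simp [h1]))] at hlength
  exact (pow_le_pow_left₀ Real.pi_nonneg hlength 2).trans (sq_integral_le_integral_sq hw'.norm)

end SpherePath

section Hopf

variable {V : Type*} [NormedAddCommGroup V] [InnerProductSpace ℂ V]

/-- The projection of a tangent vector at `z ≠ 0` onto the orthogonal complement of the complex
line through `z`, rescaled by `‖z‖⁻¹`: its norm is the Fubini–Study length of the vector. -/
noncomputable def horizontalPart (z : V) : V →L[ℂ] V :=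
  (‖z‖ : ℂ)⁻¹ • (ℂ ∙ z)ᗮ.starProjection

/-- The connection form of the Hopf fibration over projective space, pulled back to `V`:
the angular velocity of the phase of `z` when `z` moves with velocity `x`. -/
noncomputable def connectionForm (z x : V) : ℝ :=
  (⟪z, x⟫_ℂ).im / ‖z‖ ^ 2

lemma horizontalPart_apply (z x : V) :
    horizontalPart z x = (‖z‖ : ℂ)⁻¹ • (x - (⟪z, x⟫_ℂ / ‖z‖ ^ 2) • z) := by
  rw [horizontalPart, smul_apply, Submodule.starProjection_orthogonal_val,
    Submodule.starProjection_singleton]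
  norm_cast

lemma inner_horizontalPart_right (z x : V) : ⟪z, horizontalPart z x⟫_ℂ = 0 := by
  rw [horizontalPart, smul_apply, inner_smul_right,
    Submodule.mem_orthogonal_singleton_iff_inner_right.1 (Submodule.starProjection_apply_mem _ x),
    mul_zero]

lemma inner_horizontalPart_horizontalPart (z x y : V) :
    ⟪horizontalPart z x, horizontalPart z y⟫_ℂ =
      ⟪x, y⟫_ℂ / ‖z‖ ^ 2 - ⟪x, z⟫_ℂ * ⟪z, y⟫_ℂ / ‖z‖ ^ 4 := by
  rw [horizontalPart_apply z x, inner_smul_left, inner_sub_left, inner_smul_left (𝕜 := ℂ) z,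
    inner_horizontalPart_right, mul_zero, sub_zero, horizontalPart_apply, inner_smul_right,
    inner_sub_right, inner_smul_right, map_inv₀, Complex.conj_ofReal]
  rcases eq_or_ne z 0 with rfl | hz
  · simp
  · field_simp [norm_ne_zero_iff.2 hz]

lemma norm_sq_horizontalPart (z x : V) :
    ‖horizontalPart z x‖ ^ 2 = ‖x‖ ^ 2 / ‖z‖ ^ 2 - ‖⟪z, x⟫_ℂ‖ ^ 2 / ‖z‖ ^ 4 := by
  apply Complex.ofReal_injective
  have h := inner_horizontalPart_horizontalPart z x x
  rw [inner_self_eq_norm_sq_to_K, inner_self_eq_norm_sq_to_K, ← inner_conj_symm x z,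
    Complex.conj_mul'] at h
  push_cast
  exact h

lemma norm_sq_horizontalPart_of_inner_eq_zero {z x : V} (h : ⟪z, x⟫_ℂ = 0) :
    ‖horizontalPart z x‖ ^ 2 = ‖x‖ ^ 2 / ‖z‖ ^ 2 := by
  simp [norm_sq_horizontalPart, h]

lemma continuous_horizontalPart {X : Type*} [TopologicalSpace X] {z x : X → V}
    (hz : Continuous z) (hx : Continuous x) (hz0 : ∀ p, z p ≠ 0) :
    Continuous fun p ↦ horizontalPart (z p) (x p) := by
  have hne (p : X) : (‖z p‖ : ℂ) ≠ 0 := by simpa using hz0 p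
  simp only [horizontalPart_apply]
  fun_prop (disch := simp_all)

lemma continuous_connectionForm {X : Type*} [TopologicalSpace X] {z x : X → V}
    (hz : Continuous z) (hx : Continuous x) (hz0 : ∀ p, z p ≠ 0) :
    Continuous fun p ↦ connectionForm (z p) (x p) :=
  (Complex.continuous_im.comp (hz.inner hx)).div (by fun_prop)
    fun p ↦ pow_ne_zero 2 (norm_ne_zero_iff.2 (hz0 p))

lemma inner_div_norm_sq_eq (z x : V) :
    ⟪z, x⟫_ℂ / ‖z‖ ^ 2 = ↑((⟪z, x⟫_ℂ).re / ‖z‖ ^ 2) + ↑(connectionForm z x) * Complex.I := by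
  rw [connectionForm]
  push_cast
  rw [div_mul_eq_mul_div, ← add_div, Complex.re_add_im]

lemma hasDerivAt_norm_sq {Z : ℝ → V} {Z' : V} {t : ℝ} (hZ : HasDerivAt Z Z' t) :
    HasDerivAt (fun t ↦ ‖Z t‖ ^ 2) (2 * (⟪Z t, Z'⟫_ℂ).re) t :=
  letI := InnerProductSpace.complexToReal (G := V)
  hZ.norm_sq

lemma hasDerivAt_norm {Z : ℝ → V} {Z' : V} {t : ℝ} (hZ : HasDerivAt Z Z' t) (h0 : Z t ≠ 0) :
    HasDerivAt (fun t ↦ ‖Z t‖) ((⟪Z t, Z'⟫_ℂ).re / ‖Z t‖) t := by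
  have hne : ‖Z t‖ ^ 2 ≠ 0 := pow_ne_zero 2 (norm_ne_zero_iff.2 h0)
  simpa [mul_div_mul_left] using (hasDerivAt_norm_sq hZ).sqrt hne

lemma hasDerivAt_inv_norm_smul {Z : ℝ → V} {Z' : V} {t : ℝ} (hZ : HasDerivAt Z Z' t)
    (h0 : Z t ≠ 0) :
    HasDerivAt (fun t ↦ (‖Z t‖ : ℂ)⁻¹ • Z t)
      ((connectionForm (Z t) Z' * Complex.I) • (‖Z t‖ : ℂ)⁻¹ • Z t +
        horizontalPart (Z t) Z') t := by
  have hn : (‖Z t‖ : ℂ) ≠ 0 := Complex.ofReal_ne_zero.2 (norm_ne_zero_iff.2 h0)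
  refine (((hasDerivAt_norm hZ h0).ofReal_comp.inv hn).smul hZ).congr_deriv ?_
  rw [horizontalPart_apply, inner_div_norm_sq_eq, Pi.inv_apply]
  match_scalars <;> field_simp
  ring

lemma hasDerivAt_exp_smul_inv_norm_smul {θ : ℝ → ℝ} {θ' : ℝ} {Z : ℝ → V} {Z' : V} {t : ℝ}
    (hθ : HasDerivAt θ θ' t) (hZ : HasDerivAt Z Z' t) (h0 : Z t ≠ 0) :
    HasDerivAt (fun t ↦ Complex.exp (θ t * Complex.I) • (‖Z t‖ : ℂ)⁻¹ • Z t)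
      (Complex.exp (θ t * Complex.I) • (((θ' + connectionForm (Z t) Z' : ℝ) * Complex.I) •
        (‖Z t‖ : ℂ)⁻¹ • Z t + horizontalPart (Z t) Z')) t := by
  refine ((hθ.ofReal_comp.mul_const Complex.I).cexp.smul
    (hasDerivAt_inv_norm_smul hZ h0)).congr_deriv ?_
  match_scalars <;> ring

lemma norm_sq_exp_smul_add_horizontalPart (θ r : ℝ) {z : V} (hz : z ≠ 0) (x : V) :
    ‖Complex.exp (θ * Complex.I) • ((r * Complex.I) • (‖z‖ : ℂ)⁻¹ • z + horizontalPart z x)‖ ^ 2 =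
      r ^ 2 + ‖horizontalPart z x‖ ^ 2 := by
  have horth : ⟪(r * Complex.I) • (‖z‖ : ℂ)⁻¹ • z, horizontalPart z x⟫_ℂ = 0 := by
    rw [inner_smul_left, inner_smul_left, inner_horizontalPart_right, mul_zero, mul_zero]
  rw [norm_smul, Complex.norm_exp_ofReal_mul_I, one_mul, sq,
    norm_add_sq_eq_norm_sq_add_norm_sq_of_inner_eq_zero _ _ horth]
  simp [norm_smul, inv_mul_cancel₀ (norm_ne_zero_iff.2 hz), ← sq]

lemma sq_pi_sub_sq_integral_connectionForm_le {Z Z' : ℝ → V} (hZ : ∀ t, HasDerivAt Z (Z' t) t)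
    (hZ' : Continuous Z') (h0 : ∀ t, Z t ≠ 0) (hanti : Z 1 = -Z 0) :
    π ^ 2 - (∫ t in (0 : ℝ)..1, connectionForm (Z t) (Z' t)) ^ 2 ≤
      ∫ t in (0 : ℝ)..1, ‖horizontalPart (Z t) (Z' t)‖ ^ 2 := by
  let := InnerProductSpace.complexToReal (G := V)
  have hZc : Continuous Z := continuous_iff_continuousAt.2 fun t ↦ (hZ t).continuousAt
  set A : ℝ → ℝ := fun t ↦ connectionForm (Z t) (Z' t)
  have hA : Continuous A := continuous_connectionForm hZc hZ' h0
  have hH : Continuous fun t ↦ horizontalPart (Z t) (Z' t) := continuous_horizontalPart hZc hZ' h0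
  set η := ∫ t in (0 : ℝ)..1, A t
  -- The gauge `θ` vanishes at both ends and spreads the holonomy `η` evenly over the line.
  set θ : ℝ → ℝ := fun t ↦ ∫ s in (0 : ℝ)..t, (η - A s)
  have hθ (t : ℝ) : HasDerivAt θ (η - A t) t :=
    ((continuous_const.sub hA).integral_hasStrictDerivAt 0 t).hasDerivAt
  have hθ0 : θ 0 = 0 := intervalIntegral.integral_same
  have hθ1 : θ 1 = 0 := by
    simp only [θ]
    rw [intervalIntegral.integral_sub (by simp) (hA.intervalIntegrable _ _)]
    simp [η]
  have hθc : Continuous θ := continuous_iff_continuousAt.2 fun t ↦ (hθ t).continuousAt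
  have hn (t : ℝ) : (‖Z t‖ : ℂ) ≠ 0 := by simpa using h0 t
  have hlength := sq_pi_le_integral_norm_deriv_sq
    (fun t ↦ hasDerivAt_exp_smul_inv_norm_smul (hθ t) (hZ t) (h0 t))
    (by simp only [sub_add_cancel, A]; fun_prop (disch := exact hn _))
    (fun t ↦ by
      rw [norm_smul, Complex.norm_exp_ofReal_mul_I, norm_smul, norm_inv, Complex.norm_real,
        norm_norm, inv_mul_cancel₀ (norm_ne_zero_iff.2 (h0 t)), one_mul])
    (by simp [hθ0, hθ1, hanti])
  simp only [A, sub_add_cancel, norm_sq_exp_smul_add_horizontalPart _ _ (h0 _)] at hlength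
  rw [intervalIntegral.integral_add (by simp) ((by fun_prop : Continuous _).intervalIntegrable _ _)]
    at hlength
  rw [sub_le_iff_le_add']
  simpa using hlength

end Hopf

section Curvature

variable {E V : Type*} [NormedAddCommGroup E] [NormedSpace ℝ E]
  [NormedAddCommGroup V] [InnerProductSpace ℂ V]

lemma contDiff_norm_sq_complex {n : WithTop ℕ∞} {Z : E → V} (hZ : ContDiff ℝ n Z) :
    ContDiff ℝ n fun p ↦ ‖Z p‖ ^ 2 :=
  let := InnerProductSpace.complexToReal (G := V)
  hZ.norm_sq ℝ

lemma contDiff_connectionForm {n : WithTop ℕ∞} {Z X : E → V} (hZ : ContDiff ℝ n Z)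
    (hX : ContDiff ℝ n X) (h0 : ∀ p, Z p ≠ 0) :
    ContDiff ℝ n fun p ↦ connectionForm (Z p) (X p) :=
  (Complex.imCLM.contDiff.comp (hZ.inner ℂ hX)).div (contDiff_norm_sq_complex hZ)
    fun p ↦ pow_ne_zero 2 (norm_ne_zero_iff.2 (h0 p))

lemma hasDerivAt_connectionForm {Z X : ℝ → V} {Z' X' : V} {t : ℝ} (hZ : HasDerivAt Z Z' t)
    (hX : HasDerivAt X X' t) (h0 : Z t ≠ 0) :
    HasDerivAt (fun t ↦ connectionForm (Z t) (X t))
      (connectionForm (Z t) X' + (⟪horizontalPart (Z t) Z', horizontalPart (Z t) (X t)⟫_ℂ).im -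
        (⟪Z t, Z'⟫_ℂ * ⟪Z t, X t⟫_ℂ).im / ‖Z t‖ ^ 4) t := by
  have hn : ‖Z t‖ ≠ 0 := norm_ne_zero_iff.2 h0
  have him : HasDerivAt (fun t ↦ (⟪Z t, X t⟫_ℂ).im) ((⟪Z t, X'⟫_ℂ + ⟪Z', X t⟫_ℂ).im) t :=
    Complex.imCLM.hasFDerivAt.comp_hasDerivAt t (hZ.inner ℂ hX)
  refine (him.div (hasDerivAt_norm_sq hZ) (pow_ne_zero 2 hn)).congr_deriv ?_
  rw [inner_horizontalPart_horizontalPart, connectionForm, ← inner_conj_symm Z' (Z t)]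
  norm_cast
  simp only [Complex.sub_im, Complex.div_ofReal_im, Complex.mul_im, Complex.add_im,
    Complex.conj_re, Complex.conj_im]
  field_simp
  ring

lemma fderiv_connectionForm_apply {Z X : E → V} {p : E} (hZ : DifferentiableAt ℝ Z p)
    (hX : DifferentiableAt ℝ X p) (h0 : Z p ≠ 0) (w : E) :
    fderiv ℝ (fun q ↦ connectionForm (Z q) (X q)) p w =
      connectionForm (Z p) (fderiv ℝ X p w) +
        (⟪horizontalPart (Z p) (fderiv ℝ Z p w), horizontalPart (Z p) (X p)⟫_ℂ).im -
        (⟪Z p, fderiv ℝ Z p w⟫_ℂ * ⟪Z p, X p⟫_ℂ).im / ‖Z p‖ ^ 4 := by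
  have hA : DifferentiableAt ℝ (fun q ↦ connectionForm (Z q) (X q)) p := by
    let := InnerProductSpace.complexToReal (G := V)
    simp only [connectionForm, div_eq_mul_inv]
    exact (Complex.imCLM.differentiableAt.comp p (hZ.inner ℂ hX)).mul
      ((hZ.norm_sq ℝ).inv (pow_ne_zero 2 (norm_ne_zero_iff.2 h0)))
  have hline := hasDerivAt_connectionForm (hZ.hasFDerivAt.hasLineDerivAt w)
    (hX.hasFDerivAt.hasLineDerivAt w) (by simpa using h0)
  simpa using (hA.hasFDerivAt.hasLineDerivAt w).unique hline

lemma fderiv_fderiv_apply {F : Type*} [NormedAddCommGroup F] [NormedSpace ℝ F] {f : E → F}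
    (hf : ContDiff ℝ 2 f) (p v w : E) :
    fderiv ℝ (fun q ↦ fderiv ℝ f q v) p w = fderiv ℝ (fderiv ℝ f) p w v := by
  have hd : DifferentiableAt ℝ (fderiv ℝ f) p :=
    (hf.fderiv_right (m := 1) le_rfl).differentiable one_ne_zero p
  simp [fderiv_clm_apply hd (differentiableAt_const v)]

lemma fderiv_connectionForm_sub_fderiv_connectionForm {Z : E → V} (hZ : ContDiff ℝ 2 Z)
    (h0 : ∀ p, Z p ≠ 0) (p v w : E) :
    fderiv ℝ (fun q ↦ connectionForm (Z q) (fderiv ℝ Z q v)) p w -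
        fderiv ℝ (fun q ↦ connectionForm (Z q) (fderiv ℝ Z q w)) p v =
      2 * (⟪horizontalPart (Z p) (fderiv ℝ Z p w),
        horizontalPart (Z p) (fderiv ℝ Z p v)⟫_ℂ).im := by
  have hZ1 : ContDiff ℝ 1 Z := hZ.of_le one_le_two
  have hD (u : E) : ContDiff ℝ 1 fun q ↦ fderiv ℝ Z q u :=
    (hZ.fderiv_right le_rfl).clm_apply contDiff_const
  have hsymm : fderiv ℝ (fderiv ℝ Z) p v w = fderiv ℝ (fderiv ℝ Z) p w v :=
    (hZ.contDiffAt.isSymmSndFDerivAt (by simp)).eq v w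
  have hformula (u u' : E) := fderiv_connectionForm_apply (hZ1.differentiable one_ne_zero p)
    ((hD u).differentiable one_ne_zero p) (h0 p) u'
  rw [hformula, hformula, fderiv_fderiv_apply hZ, fderiv_fderiv_apply hZ, hsymm,
    mul_comm ⟪Z p, fderiv ℝ Z p v⟫_ℂ,
    ← inner_conj_symm (horizontalPart (Z p) (fderiv ℝ Z p v)), Complex.conj_im]
  ring

end Curvature

section Oscillation

lemma abs_sub_le_integral_abs_deriv {g g' : ℝ → ℝ} {a b : ℝ} (hab : a ≤ b)
    (hg : ∀ t, HasDerivAt g (g' t) t) (hg' : Continuous g') :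
    |g b - g a| ≤ ∫ t in a..b, |g' t| := by
  rw [← intervalIntegral.integral_eq_sub_of_hasDerivAt (fun t _ ↦ hg t)
    (hg'.intervalIntegrable a b)]
  exact intervalIntegral.abs_integral_le_integral_abs hab

lemma periodic_deriv_of_periodic {F : Type*} [NormedAddCommGroup F] [NormedSpace ℝ F]
    {g g' : ℝ → F} {c : ℝ} (hper : Periodic g c) (hg : ∀ t, HasDerivAt g (g' t) t) :
    Periodic g' c := fun t ↦ by
  have h := (hg (t + c)).comp_add_const t c
  rw [hper.funext] at h
  exact h.unique (hg t)

lemma two_mul_abs_sub_le_integral_abs_deriv {g g' : ℝ → ℝ} (hper : Periodic g 1)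
    (hg : ∀ t, HasDerivAt g (g' t) t) (hg' : Continuous g') (s t : ℝ) :
    2 * |g t - g s| ≤ ∫ r in (0 : ℝ)..1, |g' r| := by
  obtain ⟨u, hu, hut⟩ := hper.exists_mem_Ico one_pos t s
  have hint (a b : ℝ) : IntervalIntegrable (fun r ↦ |g' r|) volume a b :=
    hg'.abs.intervalIntegrable a b
  have hperiod : ∫ r in s..s + 1, |g' r| = ∫ r in (0 : ℝ)..1, |g' r| := by
    have hper' : Periodic (fun r ↦ |g' r|) 1 :=
      (periodic_deriv_of_periodic hper hg).comp fun x ↦ |x|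
    simpa using hper'.intervalIntegral_add_eq s 0
  have hup := abs_sub_le_integral_abs_deriv hu.1 hg hg'
  have hdown := abs_sub_le_integral_abs_deriv hu.2.le hg hg'
  rw [hper s, abs_sub_comm] at hdown
  rw [hut, ← hperiod, ← intervalIntegral.integral_add_adjacent_intervals (hint s u) (hint u _)]
  linarith

lemma integral_sqrt_sq_sub_sub_sq {m : ℝ} (hm : 0 ≤ m) (μ : ℝ) :
    ∫ x in (μ - m)..(μ + m), √(m ^ 2 - (x - μ) ^ 2) = π * m ^ 2 / 2 := by
  rcases hm.eq_or_lt with rfl | hm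
  · simp
  have hscale (x : ℝ) : √(m ^ 2 - x ^ 2) = m * √(1 - (x / m) ^ 2) := by
    rw [← Real.sqrt_sq hm.le, ← Real.sqrt_mul (sq_nonneg _), Real.sqrt_sq hm.le]
    congr 1
    field_simp
  rw [intervalIntegral.integral_comp_sub_right (fun x ↦ √(m ^ 2 - x ^ 2))]
  simp only [hscale]
  rw [intervalIntegral.integral_const_mul,
    intervalIntegral.integral_comp_div (fun x ↦ √(1 - x ^ 2)) hm.ne']
  rw [sub_sub_cancel_left, add_sub_cancel_left, neg_div, div_self hm.ne', integral_sqrt_one_sub_sq,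
    smul_eq_mul]
  ring

lemma exists_midpoint_forall_abs_sub_le {η : ℝ → ℝ} {c : ℝ} (hc : c ≠ 0) (hη : Continuous η)
    (hper : Periodic η c) :
    ∃ μ m : ℝ, 0 ≤ m ∧ (∀ s, |η s - μ| ≤ m) ∧ (∃ s, η s = μ - m) ∧ ∃ s, η s = μ + m := by
  have hcompact := hper.compact_of_continuous hc hη
  obtain ⟨_, ⟨s, rfl⟩, hs⟩ := hcompact.exists_isLeast (range_nonempty η)
  obtain ⟨_, ⟨t, rfl⟩, ht⟩ := hcompact.exists_isGreatest (range_nonempty η)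
  have hst : η s ≤ η t := hs (mem_range_self t)
  refine ⟨(η s + η t) / 2, (η t - η s) / 2, by linarith, fun r ↦ abs_le.2 ?_, ⟨s, by ring⟩,
    ⟨t, by ring⟩⟩
  have hlow : η s ≤ η r := hs (mem_range_self r)
  have hhigh : η r ≤ η t := ht (mem_range_self r)
  constructor <;> linarith

lemma pi_mul_sq_le_integral_sqrt_mul_abs_deriv {η η' : ℝ → ℝ} (hper : Periodic η 1)
    (hη : ∀ t, HasDerivAt η (η' t) t) (hη' : Continuous η') {μ m : ℝ} (hm : 0 ≤ m)
    (hmin : ∃ s, η s = μ - m) (hmax : ∃ s, η s = μ + m) :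
    π * m ^ 2 ≤ ∫ t in (0 : ℝ)..1, √(m ^ 2 - (η t - μ) ^ 2) * |η' t| := by
  obtain ⟨s, hs⟩ := hmin
  obtain ⟨t, ht⟩ := hmax
  have hηc : Continuous η := continuous_iff_continuousAt.2 fun t ↦ (hη t).continuousAt
  have hφ : Continuous fun x ↦ √(m ^ 2 - (x - μ) ^ 2) := by fun_prop
  have hprim (r : ℝ) : HasDerivAt (fun r ↦ ∫ x in (0 : ℝ)..η r, √(m ^ 2 - (x - μ) ^ 2))
      (√(m ^ 2 - (η r - μ) ^ 2) * η' r) r :=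
    (hφ.integral_hasStrictDerivAt 0 (η r)).hasDerivAt.comp r (hη r)
  have hvar := two_mul_abs_sub_le_integral_abs_deriv
    (hper.comp fun y ↦ ∫ x in (0 : ℝ)..y, √(m ^ 2 - (x - μ) ^ 2)) hprim (by fun_prop) s t
  simp only [comp_apply, hs, ht] at hvar
  rw [intervalIntegral.integral_interval_sub_left (hφ.intervalIntegrable _ _)
    (hφ.intervalIntegrable _ _), integral_sqrt_sq_sub_sub_sq hm] at hvar
  simp only [abs_mul, abs_of_nonneg (Real.sqrt_nonneg _)] at hvar
  linarith [le_abs_self (π * m ^ 2 / 2)]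

lemma sub_add_sqrt_mul_le_add_of_forall_mul_le {x μ m d T W : ℝ} (hx : |x - μ| ≤ m)
    (hm : m ≤ π) (hT : π ^ 2 - x ^ 2 ≤ T)
    (hW : ∀ c, 0 ≤ c → c * d ≤ W + c ^ 2 * T) :
    π ^ 2 - m ^ 2 - 2 * μ * x + π⁻¹ * (√(m ^ 2 - (x - μ) ^ 2) * d) ≤ T + W := by
  have hm0 : 0 ≤ m := (abs_nonneg _).trans hx
  -- With this `c`, the term `c ^ 2 * π ^ 2` cancels the term `-x ^ 2` of the lower bound for `T`.
  set c := √(m ^ 2 - (x - μ) ^ 2) / π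
  have hc : c ^ 2 * π ^ 2 = m ^ 2 - (x - μ) ^ 2 := by
    rw [← mul_pow, div_mul_cancel₀ _ Real.pi_ne_zero, Real.sq_sqrt]
    exact sub_nonneg.2 (sq_le_sq.2 (hx.trans (le_abs_self m)))
  have hc1 : c ^ 2 ≤ 1 := by
    have : c ^ 2 * π ^ 2 ≤ 1 * π ^ 2 := by nlinarith [sq_nonneg (x - μ)]
    exact le_of_mul_le_mul_right this (by positivity)
  calc π ^ 2 - m ^ 2 - 2 * μ * x + π⁻¹ * (√(m ^ 2 - (x - μ) ^ 2) * d)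
      = π ^ 2 - m ^ 2 - 2 * μ * x + c * d := by ring
    _ ≤ (1 - c ^ 2) * (π ^ 2 - x ^ 2) + c * d := by
        nlinarith [mul_nonneg (sq_nonneg c) (sq_nonneg x), sq_nonneg μ]
    _ ≤ (1 - c ^ 2) * T + (W + c ^ 2 * T) :=
        add_le_add (mul_le_mul_of_nonneg_left hT (sub_nonneg.2 hc1)) (hW c (by positivity))
    _ = T + W := by ring

lemma sq_pi_le_integral_add {η η' T W : ℝ → ℝ} (hper : Periodic η 1)
    (hη : ∀ s, HasDerivAt η (η' s) s) (hη' : Continuous η') (hmean : ∫ s in (0 : ℝ)..1, η s = 0)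
    (hT : Continuous T) (hW : Continuous W) (hηT : ∀ s, π ^ 2 - η s ^ 2 ≤ T s)
    (hη'W : ∀ s c, 0 ≤ c → c * |η' s| ≤ W s + c ^ 2 * T s) :
    π ^ 2 ≤ ∫ s in (0 : ℝ)..1, (T s + W s) := by
  have hηc : Continuous η := continuous_iff_continuousAt.2 fun t ↦ (hη t).continuousAt
  have hTW : IntervalIntegrable (fun s ↦ T s + W s) volume 0 1 := (hT.add hW).intervalIntegrable _ _
  obtain ⟨μ, m, hm, hosc, hmin, hmax⟩ := exists_midpoint_forall_abs_sub_le one_ne_zero hηc hper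
  rcases le_or_gt m π with hmπ | hmπ
  · have harea := pi_mul_sq_le_integral_sqrt_mul_abs_deriv hper hη hη' hm hmin hmax
    calc π ^ 2 = π ^ 2 - m ^ 2 - 2 * μ * 0 + π⁻¹ * (π * m ^ 2) := by
          field_simp
          ring
      _ ≤ π ^ 2 - m ^ 2 - 2 * μ * (∫ s in (0 : ℝ)..1, η s) +
          π⁻¹ * ∫ s in (0 : ℝ)..1, √(m ^ 2 - (η s - μ) ^ 2) * |η' s| := by
          rw [hmean]; gcongr
      _ = ∫ s in (0 : ℝ)..1, (π ^ 2 - m ^ 2 - 2 * μ * η s +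
          π⁻¹ * (√(m ^ 2 - (η s - μ) ^ 2) * |η' s|)) := by
          rw [intervalIntegral.integral_add, intervalIntegral.integral_sub,
            intervalIntegral.integral_const_mul, intervalIntegral.integral_const_mul,
            intervalIntegral.integral_const, sub_zero, one_smul]
          all_goals exact Continuous.intervalIntegrable (by fun_prop) _ _
      _ ≤ ∫ s in (0 : ℝ)..1, (T s + W s) :=
          intervalIntegral.integral_mono zero_le_one
            (Continuous.intervalIntegrable (by fun_prop) _ _) hTW
            fun s ↦ sub_add_sqrt_mul_le_add_of_forall_mul_le (hosc s) hmπ (hηT s) (hη'W s)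
  · obtain ⟨s, hs⟩ := hmin
    obtain ⟨t, ht⟩ := hmax
    have hvar := two_mul_abs_sub_le_integral_abs_deriv hper hη hη' s t
    rw [hs, ht, show μ + m - (μ - m) = 2 * m by ring, abs_of_nonneg (by positivity)] at hvar
    calc π ^ 2 ≤ 2 * (2 * m) := by nlinarith [Real.pi_lt_four, Real.pi_pos]
      _ ≤ ∫ s in (0 : ℝ)..1, |η' s| := hvar
      _ ≤ ∫ s in (0 : ℝ)..1, (T s + W s) :=
          intervalIntegral.integral_mono zero_le_one (hη'.abs.intervalIntegrable _ _) hTW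
            fun s ↦ by linarith [hη'W s 1 zero_le_one]

end Oscillation

section CellMeasure

lemma intervalIntegral_swap_of_continuous {f : ℝ → ℝ → ℝ} (hf : Continuous ↿f) (a b c d : ℝ) :
    ∫ x in a..b, ∫ y in c..d, f x y = ∫ y in c..d, ∫ x in a..b, f x y :=
  intervalIntegral_intervalIntegral_swap <|
    (hf.continuousOn.integrableOn_compact (isCompact_uIcc.prod isCompact_uIcc)).mono_set
      (prod_mono uIoc_subset_uIcc uIoc_subset_uIcc)

lemma hasDerivAt_intervalIntegral_of_continuous {f f' : ℝ → ℝ → ℝ} (hf : Continuous ↿f)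
    (hf' : Continuous ↿f') (h : ∀ x y, HasDerivAt (fun x ↦ f x y) (f' x y) x) (a b x : ℝ) :
    HasDerivAt (fun x ↦ ∫ y in a..b, f x y) (∫ y in a..b, f' x y) x := by
  have hf'y (y : ℝ) : Continuous fun x ↦ f' x y := by fun_prop
  have hinner : Continuous fun x ↦ ∫ y in a..b, f' x y :=
    intervalIntegral.continuous_parametric_intervalIntegral_of_continuous' hf' a b
  have hprim (x : ℝ) :
      ∫ y in a..b, f x y = (∫ y in a..b, f 0 y) + ∫ u in (0 : ℝ)..x, ∫ y in a..b, f' u y := by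
    rw [intervalIntegral_swap_of_continuous hf', ← intervalIntegral.integral_add]
    · refine intervalIntegral.integral_congr fun y _ ↦ ?_
      rw [intervalIntegral.integral_eq_sub_of_hasDerivAt (fun u _ ↦ h u y)
        ((hf'y y).intervalIntegrable _ _)]
      ring
    · exact Continuous.intervalIntegrable (by fun_prop) _ _
    · exact Continuous.intervalIntegrable
        (intervalIntegral.continuous_parametric_intervalIntegral_of_continuous'
          (f := fun y x ↦ f' x y) (by fun_prop) 0 x) _ _
  rw [funext hprim]
  exact ((hinner.integral_hasStrictDerivAt 0 x).hasDerivAt).const_add _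

variable {E : Type*} [NormedAddCommGroup E] [NormedSpace ℝ E]

lemma hasDerivAt_comp_add_smul {F : Type*} [NormedAddCommGroup F] [NormedSpace ℝ F] {f : E → F}
    (hf : Differentiable ℝ f) (p v : E) (t : ℝ) :
    HasDerivAt (fun t : ℝ ↦ f (p + t • v)) (fderiv ℝ f (p + t • v) v) t := by
  have hline : HasDerivAt (fun t : ℝ ↦ p + t • v) v t := by
    simpa using ((hasDerivAt_id t).smul_const v).const_add p
  exact (hf _).hasFDerivAt.comp_hasDerivAt t hline

variable [MeasurableSpace E]

/-- The normalised Lebesgue measure of the parallelogram spanned by `e` and `τ`, a fundamental cell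
of the lattice `ℤe + ℤτ`, so that integrals over the torus become integrals on `E`. -/
noncomputable def cellMeasure (e τ : E) : Measure E :=
  ((volume.restrict (Ioc (0 : ℝ) 1)).prod (volume.restrict (Ioc (0 : ℝ) 1))).map
    fun q ↦ q.1 • e + q.2 • τ

variable [BorelSpace E] {e τ : E} {f : E → ℝ}

lemma measurable_smul_add_smul (e τ : E) : Measurable fun q : ℝ × ℝ ↦ q.1 • e + q.2 • τ :=
  Continuous.measurable (by fun_prop)

lemma cellMeasure_comm (e τ : E) : cellMeasure e τ = cellMeasure τ e := by
  rw [cellMeasure, ← Measure.prod_swap, Measure.map_map (measurable_smul_add_smul e τ)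
    measurable_swap, cellMeasure]
  congr 1 with q
  exact add_comm _ _

lemma integrable_cellMeasure (hf : Continuous f) (e τ : E) : Integrable f (cellMeasure e τ) := by
  refine (integrable_map_measure hf.aestronglyMeasurable
    (measurable_smul_add_smul e τ).aemeasurable).2 ?_
  have hcont : Continuous fun q : ℝ × ℝ ↦ f (q.1 • e + q.2 • τ) := by fun_prop
  rw [Measure.prod_restrict]
  exact (hcont.continuousOn.integrableOn_compact (isCompact_Icc.prod isCompact_Icc)).mono_set
    (prod_mono Ioc_subset_Icc_self Ioc_subset_Icc_self)

lemma integral_cellMeasure (hf : Continuous f) (e τ : E) :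
    ∫ p, f p ∂cellMeasure e τ = ∫ s in (0 : ℝ)..1, ∫ t in (0 : ℝ)..1, f (s • e + t • τ) := by
  have hmeas := measurable_smul_add_smul e τ
  have hint := (integrable_map_measure hf.aestronglyMeasurable hmeas.aemeasurable).1
    (integrable_cellMeasure hf e τ)
  simp only [intervalIntegral.integral_of_le zero_le_one]
  rw [cellMeasure, integral_map hmeas.aemeasurable hf.aestronglyMeasurable]
  exact integral_prod _ hint

lemma integral_cellMeasure_add_smul (hf : Continuous f) (hper : Periodic f e) (x : ℝ) :
    ∫ p, f p ∂cellMeasure e (τ + x • e) = ∫ p, f p ∂cellMeasure e τ := by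
  rw [cellMeasure_comm, integral_cellMeasure hf, cellMeasure_comm, integral_cellMeasure hf]
  refine intervalIntegral.integral_congr fun t _ ↦ ?_
  have hper' : Periodic (fun s : ℝ ↦ f (t • τ + s • e)) 1 := fun s ↦ by
    simpa [add_smul, add_assoc] using hper (t • τ + s • e)
  calc ∫ s in (0 : ℝ)..1, f (t • (τ + x • e) + s • e)
      = ∫ s in (0 : ℝ)..1, f (t • τ + (s + t * x) • e) := by
        congr 1 with s
        congr 1
        module
    _ = ∫ s in (0 : ℝ)..1, f (t • τ + s • e) := by
        rw [intervalIntegral.integral_comp_add_right fun s ↦ f (t • τ + s • e)]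
        simpa [add_comm] using hper'.intervalIntegral_add_eq (t * x) 0

lemma integral_fderiv_right_cellMeasure_eq_zero (hf : ContDiff ℝ 1 f) (hper : Periodic f τ)
    (e : E) :
    ∫ p, fderiv ℝ f p τ ∂cellMeasure e τ = 0 := by
  have hcont : Continuous fun p ↦ fderiv ℝ f p τ :=
    (hf.continuous_fderiv one_ne_zero).clm_apply continuous_const
  rw [integral_cellMeasure hcont]
  refine (intervalIntegral.integral_congr fun s _ ↦ ?_).trans intervalIntegral.integral_zero
  rw [intervalIntegral.integral_eq_sub_of_hasDerivAt
    (fun t _ ↦ hasDerivAt_comp_add_smul (hf.differentiable one_ne_zero) (s • e) τ t)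
    (Continuous.intervalIntegrable (by fun_prop) _ _)]
  simpa [sub_eq_zero] using hper (s • e)

lemma integral_fderiv_left_cellMeasure_eq_zero (hf : ContDiff ℝ 1 f) (hper : Periodic f e) (τ : E) :
    ∫ p, fderiv ℝ f p e ∂cellMeasure e τ = 0 := by
  rw [cellMeasure_comm, integral_fderiv_right_cellMeasure_eq_zero hf hper]

lemma integral_fderiv_cellMeasure_eq_zero (hf : ContDiff ℝ 1 f) (he : Periodic f e)
    (hτ : Periodic f τ) (hspan : Surjective fun q : ℝ × ℝ ↦ q.1 • e + q.2 • τ) (v : E) :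
    ∫ p, fderiv ℝ f p v ∂cellMeasure e τ = 0 := by
  obtain ⟨⟨x, y⟩, rfl⟩ := hspan v
  have hint (w : E) : Integrable (fun p ↦ fderiv ℝ f p w) (cellMeasure e τ) :=
    integrable_cellMeasure ((hf.continuous_fderiv one_ne_zero).clm_apply continuous_const) e τ
  simp only [map_add, map_smul, smul_eq_mul]
  rw [integral_add ((hint e).const_mul x) ((hint τ).const_mul y), integral_const_mul,
    integral_const_mul, integral_fderiv_left_cellMeasure_eq_zero hf he,
    integral_fderiv_right_cellMeasure_eq_zero hf hτ, mul_zero, mul_zero, add_zero]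

lemma cellMeasure_absolutelyContinuous [FiniteDimensional ℝ E] (ν : Measure E) [ν.IsAddHaarMeasure]
    (h : Surjective fun q : ℝ × ℝ ↦ q.1 • e + q.2 • τ) : cellMeasure e τ ≪ ν := by
  let L : ℝ × ℝ →ₗ[ℝ] E :=
    (LinearMap.toSpanSingleton ℝ E e).coprod (LinearMap.toSpanSingleton ℝ E τ)
  obtain ⟨c, -, hc⟩ := L.exists_map_addHaar_eq_smul_addHaar volume ν h
  have hvol : (volume : Measure (ℝ × ℝ)).map L ≪ ν := hc ▸ Measure.smul_absolutelyContinuous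
  rw [cellMeasure, Measure.prod_restrict]
  exact (Measure.restrict_le_self.absolutelyContinuous.map
    (measurable_smul_add_smul e τ)).trans hvol

end CellMeasure

section Energy

variable {E V : Type*} [NormedAddCommGroup E] [NormedSpace ℝ E]
  [NormedAddCommGroup V] [InnerProductSpace ℂ V] {Z : E → V} {e τ : E}

lemma periodic_fderiv {F : Type*} [NormedAddCommGroup F] [NormedSpace ℝ F] {f : E → F}
    (hf : Periodic f e) : Periodic (fderiv ℝ f) e := fun p ↦ by
  rw [← fderiv_comp_add_right, funext hf]

lemma antiperiodic_fderiv {F : Type*} [NormedAddCommGroup F] [NormedSpace ℝ F] {f : E → F}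
    (hf : Antiperiodic f τ) : Antiperiodic (fderiv ℝ f) τ := fun p ↦ by
  rw [← fderiv_comp_add_right, funext hf, fderiv_fun_neg]

lemma periodic_connectionForm_of_periodic (hZ : Periodic Z e) (v : E) :
    Periodic (fun p ↦ connectionForm (Z p) (fderiv ℝ Z p v)) e := fun p ↦ by
  simp only [hZ p, periodic_fderiv hZ p]

lemma periodic_connectionForm_of_antiperiodic (hZ : Antiperiodic Z τ) (v : E) :
    Periodic (fun p ↦ connectionForm (Z p) (fderiv ℝ Z p v)) τ := fun p ↦ by
  simp [connectionForm, hZ p, antiperiodic_fderiv hZ p]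

lemma mul_abs_two_mul_im_inner_le {c : ℝ} (hc : 0 ≤ c) (x y : V) :
    c * |2 * (⟪x, y⟫_ℂ).im| ≤ ‖x‖ ^ 2 + c ^ 2 * ‖y‖ ^ 2 := by
  have him : |(⟪x, y⟫_ℂ).im| ≤ ‖x‖ * ‖y‖ :=
    (Complex.abs_im_le_norm _).trans (norm_inner_le_norm x y)
  calc c * |2 * (⟪x, y⟫_ℂ).im| = 2 * c * |(⟪x, y⟫_ℂ).im| := by rw [abs_mul, abs_two]; ring
    _ ≤ 2 * c * (‖x‖ * ‖y‖) := by gcongr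
    _ ≤ ‖x‖ ^ 2 + c ^ 2 * ‖y‖ ^ 2 := by linarith [sq_nonneg (‖x‖ - c * ‖y‖)]

lemma mul_abs_integral_two_mul_im_inner_le {c : ℝ} (hc : 0 ≤ c) {x y : ℝ → V} (hx : Continuous x)
    (hy : Continuous y) :
    c * |∫ t in (0 : ℝ)..1, 2 * (⟪x t, y t⟫_ℂ).im| ≤
      (∫ t in (0 : ℝ)..1, ‖x t‖ ^ 2) + c ^ 2 * ∫ t in (0 : ℝ)..1, ‖y t‖ ^ 2 := by
  have hint {g : ℝ → ℝ} (hg : Continuous g) : IntervalIntegrable g volume 0 1 :=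
    hg.intervalIntegrable _ _
  calc c * |∫ t in (0 : ℝ)..1, 2 * (⟪x t, y t⟫_ℂ).im|
      ≤ c * ∫ t in (0 : ℝ)..1, |2 * (⟪x t, y t⟫_ℂ).im| :=
        mul_le_mul_of_nonneg_left (intervalIntegral.abs_integral_le_integral_abs zero_le_one) hc
    _ = ∫ t in (0 : ℝ)..1, c * |2 * (⟪x t, y t⟫_ℂ).im| :=
        (intervalIntegral.integral_const_mul _ _).symm
    _ ≤ ∫ t in (0 : ℝ)..1, (‖x t‖ ^ 2 + c ^ 2 * ‖y t‖ ^ 2) :=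
        intervalIntegral.integral_mono zero_le_one (hint (by fun_prop)) (hint (by fun_prop))
          fun t ↦ mul_abs_two_mul_im_inner_le hc _ _
    _ = _ := by
        rw [intervalIntegral.integral_add (hint (by fun_prop)) (hint (by fun_prop)),
          intervalIntegral.integral_const_mul]

lemma continuous_horizontalPart_fderiv (hZ : ContDiff ℝ 1 Z) (h0 : ∀ p, Z p ≠ 0) (v : E) :
    Continuous fun p ↦ horizontalPart (Z p) (fderiv ℝ Z p v) :=
  continuous_horizontalPart hZ.continuous
    ((hZ.continuous_fderiv one_ne_zero).clm_apply continuous_const) h0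

lemma contDiff_connectionForm_fderiv (hZ : ContDiff ℝ 2 Z) (h0 : ∀ p, Z p ≠ 0) (v : E) :
    ContDiff ℝ 1 fun p ↦ connectionForm (Z p) (fderiv ℝ Z p v) :=
  contDiff_connectionForm (hZ.of_le one_le_two)
    ((hZ.fderiv_right le_rfl).clm_apply contDiff_const) h0

lemma hasDerivAt_integral_connectionForm (hZ : ContDiff ℝ 2 Z) (h0 : ∀ p, Z p ≠ 0)
    (hanti : Antiperiodic Z τ) (e : E) (s : ℝ) :
    HasDerivAt
      (fun s : ℝ ↦ ∫ t in (0 : ℝ)..1,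
        connectionForm (Z (s • e + t • τ)) (fderiv ℝ Z (s • e + t • τ) τ))
      (∫ t in (0 : ℝ)..1, 2 * (⟪horizontalPart (Z (s • e + t • τ)) (fderiv ℝ Z (s • e + t • τ) e),
        horizontalPart (Z (s • e + t • τ)) (fderiv ℝ Z (s • e + t • τ) τ)⟫_ℂ).im) s := by
  have hA := contDiff_connectionForm_fderiv hZ h0
  set A : E → E → ℝ := fun v p ↦ connectionForm (Z p) (fderiv ℝ Z p v)
  have hA' (v w : E) : Continuous fun p ↦ fderiv ℝ (A v) p w :=
    ((hA v).continuous_fderiv one_ne_zero).clm_apply continuous_const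
  have hderiv := hasDerivAt_intervalIntegral_of_continuous
    (f := fun s t ↦ A τ (s • e + t • τ)) (f' := fun s t ↦ fderiv ℝ (A τ) (s • e + t • τ) e)
    ((hA τ).continuous.comp (by fun_prop)) ((hA' τ e).comp (by fun_prop))
    (fun s t ↦ by
      simpa only [add_comm] using
        hasDerivAt_comp_add_smul ((hA τ).differentiable one_ne_zero) (t • τ) e s) 0 1 s
  have hfundamental : ∫ t in (0 : ℝ)..1, fderiv ℝ (A e) (s • e + t • τ) τ = 0 := by
    rw [intervalIntegral.integral_eq_sub_of_hasDerivAt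
      (fun t _ ↦ hasDerivAt_comp_add_smul ((hA e).differentiable one_ne_zero) (s • e) τ t)
      (((hA' e τ).comp (by fun_prop)).intervalIntegrable _ _)]
    simpa [sub_eq_zero] using periodic_connectionForm_of_antiperiodic hanti e (s • e)
  refine hderiv.congr_deriv ?_
  simp only [← fderiv_connectionForm_sub_fderiv_connectionForm hZ h0]
  refine Eq.trans ?_ (intervalIntegral.integral_sub
    (((hA' τ e).comp (by fun_prop)).intervalIntegrable _ _)
    (((hA' e τ).comp (by fun_prop)).intervalIntegrable _ _)).symm
  exact (sub_eq_self.2 hfundamental).symm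

variable [MeasurableSpace E] [BorelSpace E]

lemma sq_pi_le_integral_norm_sq_horizontalPart (hZ : ContDiff ℝ 2 Z) (h0 : ∀ p, Z p ≠ 0)
    (hper : Periodic Z e) (hanti : Antiperiodic Z τ)
    (hmean : ∫ p, connectionForm (Z p) (fderiv ℝ Z p τ) ∂cellMeasure e τ = 0) :
    π ^ 2 ≤ ∫ p, (‖horizontalPart (Z p) (fderiv ℝ Z p τ)‖ ^ 2 +
      ‖horizontalPart (Z p) (fderiv ℝ Z p e)‖ ^ 2) ∂cellMeasure e τ := by
  have hZ1 : ContDiff ℝ 1 Z := hZ.of_le one_le_two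
  have hD (v : E) : Continuous fun p ↦ fderiv ℝ Z p v :=
    (hZ1.continuous_fderiv one_ne_zero).clm_apply continuous_const
  have hA := (contDiff_connectionForm_fderiv hZ h0 τ).continuous
  have hH := continuous_horizontalPart_fderiv hZ1 h0
  set A : E → ℝ := fun p ↦ connectionForm (Z p) (fderiv ℝ Z p τ)
  set H : E → E → V := fun v p ↦ horizontalPart (Z p) (fderiv ℝ Z p v)
  have hN (v : E) : Continuous fun p ↦ ‖H v p‖ ^ 2 := by fun_prop
  have hline {g : E → ℝ} (hg : Continuous g) :
      Continuous fun s : ℝ ↦ ∫ t in (0 : ℝ)..1, g (s • e + t • τ) :=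
    intervalIntegral.continuous_parametric_intervalIntegral_of_continuous' (by fun_prop) 0 1
  rw [integral_cellMeasure hA] at hmean
  have hcurv : Continuous fun p ↦ 2 * (⟪H e p, H τ p⟫_ℂ).im := by fun_prop
  have hbound := sq_pi_le_integral_add
    (η := fun s ↦ ∫ t in (0 : ℝ)..1, A (s • e + t • τ))
    (T := fun s ↦ ∫ t in (0 : ℝ)..1, ‖H τ (s • e + t • τ)‖ ^ 2)
    (W := fun s ↦ ∫ t in (0 : ℝ)..1, ‖H e (s • e + t • τ)‖ ^ 2)
    (fun s ↦ by
      refine intervalIntegral.integral_congr fun t _ ↦ ?_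
      simpa [add_smul, add_right_comm] using
        periodic_connectionForm_of_periodic hper τ (s • e + t • τ))
    (hasDerivAt_integral_connectionForm hZ h0 hanti e) (hline hcurv) hmean
    (hline (hN τ)) (hline (hN e))
    (fun s ↦ sq_pi_sub_sq_integral_connectionForm_le
      (hasDerivAt_comp_add_smul (hZ1.differentiable one_ne_zero) (s • e) τ)
      ((hD τ).comp (by fun_prop)) (fun t ↦ h0 _) (by simpa using hanti (s • e)))
    (fun s c hc ↦ mul_abs_integral_two_mul_im_inner_le hc
      ((hH e).comp (by fun_prop)) ((hH τ).comp (by fun_prop)))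
  calc π ^ 2 ≤ ∫ s in (0 : ℝ)..1, ((∫ t in (0 : ℝ)..1, ‖H τ (s • e + t • τ)‖ ^ 2) +
        ∫ t in (0 : ℝ)..1, ‖H e (s • e + t • τ)‖ ^ 2) := hbound
    _ = ∫ s in (0 : ℝ)..1, ∫ t in (0 : ℝ)..1,
        (‖H τ (s • e + t • τ)‖ ^ 2 + ‖H e (s • e + t • τ)‖ ^ 2) :=
      intervalIntegral.integral_congr fun s _ ↦ (intervalIntegral.integral_add
        (((hN τ).comp (by fun_prop)).intervalIntegrable _ _)
        (((hN e).comp (by fun_prop)).intervalIntegrable _ _)).symm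
    _ = ∫ p, (‖H τ p‖ ^ 2 + ‖H e p‖ ^ 2) ∂cellMeasure e τ :=
      (integral_cellMeasure ((hN τ).add (hN e)) e τ).symm

lemma sq_pi_le_integral_norm_sq_horizontalPart_add_smul (hZ : ContDiff ℝ 2 Z)
    (h0 : ∀ p, Z p ≠ 0) (hper : Periodic Z e) (hanti : Antiperiodic Z τ) (n : ℤ)
    (hmean : ∫ p, connectionForm (Z p) (fderiv ℝ Z p (τ + (n : ℝ) • e)) ∂cellMeasure e τ = 0) :
    π ^ 2 ≤ ∫ p, (‖horizontalPart (Z p) (fderiv ℝ Z p (τ + (n : ℝ) • e))‖ ^ 2 +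
      ‖horizontalPart (Z p) (fderiv ℝ Z p e)‖ ^ 2) ∂cellMeasure e τ := by
  have hanti' : Antiperiodic Z (τ + (n : ℝ) • e) := by
    rw [Int.cast_smul_eq_zsmul, add_comm]
    exact (hper.zsmul n).add_antiperiod hanti
  have hH := continuous_horizontalPart_fderiv (hZ.of_le one_le_two) h0
  have hA := (contDiff_connectionForm_fderiv hZ h0 (τ + (n : ℝ) • e)).continuous
  rw [← integral_cellMeasure_add_smul hA (periodic_connectionForm_of_periodic hper _) n] at hmean
  rw [← integral_cellMeasure_add_smul (by fun_prop)
    (fun p ↦ by simp only [hper p, periodic_fderiv hper p]) n]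
  exact sq_pi_le_integral_norm_sq_horizontalPart hZ h0 hper hanti' hmean

end Energy

section CauchyRiemann

variable {V : Type*} [NormedAddCommGroup V] [InnerProductSpace ℂ V] {Z : ℝ × ℝ → V}

/-- The Cauchy–Riemann operator `∂ₓ + i∂_y`, that is, twice the Wirtinger derivative `∂̄`. -/
noncomputable def dbar (Z : ℝ × ℝ → V) (p : ℝ × ℝ) : V :=
  fderiv ℝ Z p (1, 0) + Complex.I • fderiv ℝ Z p (0, 1)

lemma fderiv_apply_prod {F : Type*} [NormedAddCommGroup F] [NormedSpace ℝ F] (f : ℝ × ℝ → F)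
    (p v : ℝ × ℝ) : fderiv ℝ f p v = v.1 • fderiv ℝ f p (1, 0) + v.2 • fderiv ℝ f p (0, 1) := by
  simp [← map_smul, ← map_add]

lemma fderiv_log_norm_sq (hZ : Differentiable ℝ Z) (h0 : ∀ p, Z p ≠ 0) (p v : ℝ × ℝ) :
    fderiv ℝ (fun q ↦ Real.log (‖Z q‖ ^ 2)) p v =
      2 * (⟪Z p, fderiv ℝ Z p v⟫_ℂ).re / ‖Z p‖ ^ 2 := by
  let := InnerProductSpace.complexToReal (G := V)
  have hne : ‖Z p‖ ^ 2 ≠ 0 := pow_ne_zero 2 (norm_ne_zero_iff.2 (h0 p))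
  have hline : HasDerivAt (fun t : ℝ ↦ ‖Z (p + t • v)‖ ^ 2)
      (2 * (⟪Z p, fderiv ℝ Z p v⟫_ℂ).re) 0 := by
    simpa using hasDerivAt_norm_sq ((hZ p).hasFDerivAt.hasLineDerivAt v)
  have hlog := (((hZ p).norm_sq ℝ).log hne).hasFDerivAt.hasLineDerivAt v
  refine hlog.unique ((hline.log (by simpa using hne)).congr_deriv ?_)
  rw [zero_smul, add_zero]

lemma two_mul_connectionForm_eq_fderiv_log_norm_sq (hZ : Differentiable ℝ Z)
    (h0 : ∀ p, Z p ≠ 0) {p : ℝ × ℝ} (hdbar : ⟪Z p, dbar Z p⟫_ℂ = 0) (v : ℝ × ℝ) :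
    2 * connectionForm (Z p) (fderiv ℝ Z p v) =
      fderiv ℝ (fun q ↦ Real.log (‖Z q‖ ^ 2)) p (v.2, -v.1) := by
  rw [dbar, inner_add_right, inner_smul_right] at hdbar
  have hre := congr_arg Complex.re hdbar
  have him := congr_arg Complex.im hdbar
  simp only [Complex.add_re, Complex.add_im, Complex.mul_re, Complex.mul_im, Complex.I_re,
    Complex.I_im, Complex.zero_re, Complex.zero_im] at hre him
  rw [fderiv_log_norm_sq hZ h0, connectionForm, fderiv_apply_prod Z p v,
    fderiv_apply_prod Z p (v.2, -v.1), ← mul_div_assoc]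
  congr 2
  simp only [inner_add_right, inner_smul_right_eq_smul, Complex.add_re, Complex.add_im,
    Complex.smul_re, Complex.smul_im, smul_eq_mul]
  linear_combination v.1 * him - v.2 * hre

lemma norm_sq_dbar_div_norm_sq {p : ℝ × ℝ} (hdbar : ⟪Z p, dbar Z p⟫_ℂ = 0) :
    ‖dbar Z p‖ ^ 2 / ‖Z p‖ ^ 2 =
      ‖horizontalPart (Z p) (fderiv ℝ Z p (1, 0))‖ ^ 2 +
        ‖horizontalPart (Z p) (fderiv ℝ Z p (0, 1))‖ ^ 2 -
        2 * (⟪horizontalPart (Z p) (fderiv ℝ Z p (1, 0)),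
          horizontalPart (Z p) (fderiv ℝ Z p (0, 1))⟫_ℂ).im := by
  rw [← norm_sq_horizontalPart_of_inner_eq_zero hdbar, dbar, map_add, map_smul,
    norm_add_sq (𝕜 := ℂ), norm_smul, Complex.norm_I, one_mul, inner_smul_right]
  simp only [RCLike.mul_re, RCLike.re_to_complex, Complex.I_re, zero_mul, RCLike.im_to_complex,
    Complex.I_im, one_mul, zero_sub, mul_neg]
  ring

lemma contDiff_log_norm_sq {n : WithTop ℕ∞} (hZ : ContDiff ℝ n Z) (h0 : ∀ p, Z p ≠ 0) :
    ContDiff ℝ n fun p ↦ Real.log (‖Z p‖ ^ 2) :=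
  (contDiff_norm_sq_complex hZ).log fun p ↦ pow_ne_zero 2 (norm_ne_zero_iff.2 (h0 p))

/-- The flat Laplacian of the plane `ℝ × ℝ`, which as a product carries no inner product in
Mathlib and hence none of its Laplacians. -/
noncomputable def planeLaplacian (f : ℝ × ℝ → ℝ) (p : ℝ × ℝ) : ℝ :=
  fderiv ℝ (fderiv ℝ f) p (1, 0) (1, 0) + fderiv ℝ (fderiv ℝ f) p (0, 1) (0, 1)

lemma planeLaplacian_log_norm_sq (hZ : ContDiff ℝ 2 Z) (h0 : ∀ p, Z p ≠ 0)
    (hdbar : ∀ p, ⟪Z p, dbar Z p⟫_ℂ = 0) (p : ℝ × ℝ) :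
    planeLaplacian (fun q ↦ Real.log (‖Z q‖ ^ 2)) p =
      4 * (⟪horizontalPart (Z p) (fderiv ℝ Z p (1, 0)),
        horizontalPart (Z p) (fderiv ℝ Z p (0, 1))⟫_ℂ).im := by
  have hZ1 : Differentiable ℝ Z := hZ.differentiable two_ne_zero
  have hA (v : ℝ × ℝ) : DifferentiableAt ℝ (fun q ↦ connectionForm (Z q) (fderiv ℝ Z q v)) p :=
    (contDiff_connectionForm_fderiv hZ h0 v).differentiable one_ne_zero p
  have hx (q : ℝ × ℝ) := two_mul_connectionForm_eq_fderiv_log_norm_sq hZ1 h0 (hdbar q) (0, 1)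
  have hy (q : ℝ × ℝ) := two_mul_connectionForm_eq_fderiv_log_norm_sq hZ1 h0 (hdbar q) (-1, 0)
  simp only [neg_neg, neg_zero] at hx hy
  rw [planeLaplacian, ← fderiv_fderiv_apply (contDiff_log_norm_sq hZ h0),
    ← fderiv_fderiv_apply (contDiff_log_norm_sq hZ h0), ← funext hx, ← funext hy,
    fderiv_const_mul (hA _), fderiv_const_mul (hA _)]
  have hcurv := fderiv_connectionForm_sub_fderiv_connectionForm hZ h0 p (-1, 0) (0, 1)
  have hneg : ((-1, 0) : ℝ × ℝ) = -(1, 0) := by simp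
  rw [hneg, map_neg, map_neg, map_neg, inner_neg_right, Complex.neg_im,
    ← inner_conj_symm, Complex.conj_im, neg_neg, ← hneg] at hcurv
  simp only [smul_apply, smul_eq_mul]
  linarith

lemma neg_norm_sq_dbar_div_norm_sq_le_planeLaplacian (hZ : ContDiff ℝ 2 Z) (h0 : ∀ p, Z p ≠ 0)
    (hdbar : ∀ p, ⟪Z p, dbar Z p⟫_ℂ = 0) (p : ℝ × ℝ) :
    -(‖dbar Z p‖ ^ 2 / ‖Z p‖ ^ 2) ≤ planeLaplacian (fun q ↦ Real.log (‖Z q‖ ^ 2)) p := by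
  have h := mul_abs_two_mul_im_inner_le zero_le_one (horizontalPart (Z p) (fderiv ℝ Z p (1, 0)))
    (horizontalPart (Z p) (fderiv ℝ Z p (0, 1)))
  rw [planeLaplacian_log_norm_sq hZ h0 hdbar, norm_sq_dbar_div_norm_sq (hdbar p)]
  linarith [neg_abs_le (2 * (⟪horizontalPart (Z p) (fderiv ℝ Z p (1, 0)),
    horizontalPart (Z p) (fderiv ℝ Z p (0, 1))⟫_ℂ).im)]

lemma norm_sq_smul_add_smul_add_norm_sq_le {a b : ℝ} (ha : |a| ≤ 1) (hb : 2 ≤ b ^ 2) (x y : V) :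
    ‖a • x + b • y‖ ^ 2 + ‖x‖ ^ 2 ≤
      b ^ 2 * (‖x‖ ^ 2 + ‖y‖ ^ 2) + 2 * a * b * (⟪x, y⟫_ℂ).re := by
  have ha2 : a ^ 2 ≤ 1 := (sq_le_one_iff_abs_le_one a).2 ha
  have hexpand : ‖a • x + b • y‖ ^ 2 =
      a ^ 2 * ‖x‖ ^ 2 + 2 * a * b * (⟪x, y⟫_ℂ).re + b ^ 2 * ‖y‖ ^ 2 := by
    rw [norm_add_sq (𝕜 := ℂ), norm_smul, norm_smul, mul_pow, mul_pow, Real.norm_eq_abs,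
      Real.norm_eq_abs, sq_abs, sq_abs]
    simp only [inner_smul_right_eq_smul, inner_smul_left_eq_smul, Complex.real_smul,
      RCLike.re_to_complex, Complex.re_ofReal_mul]
    ring
  rw [hexpand]
  linarith [mul_le_mul_of_nonneg_right (show a ^ 2 + 1 ≤ b ^ 2 by linarith) (sq_nonneg ‖x‖)]

lemma exists_int_abs_add_le_one_mul_nonpos (a r : ℝ) :
    ∃ n : ℤ, |a + n| ≤ 1 ∧ (a + n) * r ≤ 0 := by
  have hfract : a + (-⌊a⌋ : ℤ) = Int.fract a := by simp [Int.fract, sub_eq_add_neg]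
  have h0 := Int.fract_nonneg a
  have h1 := Int.fract_lt_one a
  rcases le_total r 0 with hr | hr
  · refine ⟨-⌊a⌋, ?_⟩
    rw [hfract, abs_of_nonneg h0]
    exact ⟨h1.le, mul_nonpos_of_nonneg_of_nonpos h0 hr⟩
  · refine ⟨-⌊a⌋ - 1, ?_⟩
    rw [Int.cast_sub, ← add_sub_assoc, hfract, Int.cast_one, abs_of_nonpos (by linarith)]
    exact ⟨by linarith, mul_nonpos_of_nonpos_of_nonneg (by linarith) hr⟩

lemma surjective_smul_add_smul (a : ℝ) {b : ℝ} (hb : b ≠ 0) :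
    Surjective fun q : ℝ × ℝ ↦ q.1 • ((1, 0) : ℝ × ℝ) + q.2 • (a, b) := fun p ↦
  ⟨(p.1 - p.2 / b * a, p.2 / b), by ext <;> simp [hb]⟩

lemma integral_connectionForm_eq_zero (hZ : ContDiff ℝ 2 Z) (h0 : ∀ p, Z p ≠ 0)
    (hdbar : ∀ p, ⟪Z p, dbar Z p⟫_ℂ = 0) {e τ : ℝ × ℝ} (he : Periodic Z e)
    (hτ : Antiperiodic Z τ) (hspan : Surjective fun q : ℝ × ℝ ↦ q.1 • e + q.2 • τ) (v : ℝ × ℝ) :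
    ∫ p, connectionForm (Z p) (fderiv ℝ Z p v) ∂cellMeasure e τ = 0 := by
  have hlog := integral_fderiv_cellMeasure_eq_zero
    ((contDiff_log_norm_sq hZ h0).of_le one_le_two) (fun p ↦ by simp only [he p])
    (fun p ↦ by simp only [hτ p, norm_neg]) hspan (v.2, -v.1)
  simp only [← two_mul_connectionForm_eq_fderiv_log_norm_sq
    (hZ.differentiable two_ne_zero) h0 (hdbar _)] at hlog
  rw [integral_const_mul] at hlog
  simpa using hlog

lemma integral_im_inner_horizontalPart_eq_zero {E : Type*} [NormedAddCommGroup E]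
    [NormedSpace ℝ E] [MeasurableSpace E] [BorelSpace E] {Z : E → V} (hZ : ContDiff ℝ 2 Z)
    (h0 : ∀ p, Z p ≠ 0) {e τ : E} (he : Periodic Z e) (hτ : Antiperiodic Z τ)
    (hspan : Surjective fun q : ℝ × ℝ ↦ q.1 • e + q.2 • τ) (v w : E) :
    ∫ p, (⟪horizontalPart (Z p) (fderiv ℝ Z p v), horizontalPart (Z p) (fderiv ℝ Z p w)⟫_ℂ).im
      ∂cellMeasure e τ = 0 := by
  have hA (u : E) := contDiff_connectionForm_fderiv hZ h0 u
  have hzero (u u' : E) := integral_fderiv_cellMeasure_eq_zero (hA u)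
    (periodic_connectionForm_of_periodic he u) (periodic_connectionForm_of_antiperiodic hτ u)
    hspan u'
  have hint (u u' : E) : Integrable
      (fun p ↦ fderiv ℝ (fun q ↦ connectionForm (Z q) (fderiv ℝ Z q u)) p u') (cellMeasure e τ) :=
    integrable_cellMeasure (((hA u).continuous_fderiv one_ne_zero).clm_apply continuous_const) e τ
  have hcurv := integral_sub (hint w v) (hint v w)
  simp only [fderiv_connectionForm_sub_fderiv_connectionForm hZ h0, hzero, sub_zero] at hcurv
  rw [integral_const_mul] at hcurv
  simpa using hcurv

lemma continuous_norm_sq_dbar_div_norm_sq (hZ : ContDiff ℝ 1 Z) (h0 : ∀ p, Z p ≠ 0) :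
    Continuous fun p ↦ ‖dbar Z p‖ ^ 2 / ‖Z p‖ ^ 2 := by
  have hdbar : Continuous (dbar Z) := by
    unfold dbar
    fun_prop
  exact (hdbar.norm.pow 2).div (hZ.continuous.norm.pow 2)
    fun p ↦ pow_ne_zero 2 (norm_ne_zero_iff.2 (h0 p))

lemma norm_sq_horizontalPart_add_norm_sq_horizontalPart_le {a b : ℝ} (ha : |a| ≤ 1)
    (hb : 2 ≤ b ^ 2) {p : ℝ × ℝ} (hdbar : ⟪Z p, dbar Z p⟫_ℂ = 0) :
    ‖horizontalPart (Z p) (fderiv ℝ Z p (a, b))‖ ^ 2 +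
        ‖horizontalPart (Z p) (fderiv ℝ Z p (1, 0))‖ ^ 2 ≤
      b ^ 2 * (‖dbar Z p‖ ^ 2 / ‖Z p‖ ^ 2) +
        2 * b ^ 2 * (⟪horizontalPart (Z p) (fderiv ℝ Z p (1, 0)),
          horizontalPart (Z p) (fderiv ℝ Z p (0, 1))⟫_ℂ).im +
        2 * a * b * (⟪horizontalPart (Z p) (fderiv ℝ Z p (1, 0)),
          horizontalPart (Z p) (fderiv ℝ Z p (0, 1))⟫_ℂ).re := by
  have h := norm_sq_smul_add_smul_add_norm_sq_le ha hb
    (horizontalPart (Z p) (fderiv ℝ Z p (1, 0))) (horizontalPart (Z p) (fderiv ℝ Z p (0, 1)))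
  have hsplit : horizontalPart (Z p) (fderiv ℝ Z p (a, b)) =
      a • horizontalPart (Z p) (fderiv ℝ Z p (1, 0)) +
        b • horizontalPart (Z p) (fderiv ℝ Z p (0, 1)) := by
    simp [fderiv_apply_prod Z p (a, b)]
  rw [norm_sq_dbar_div_norm_sq hdbar, hsplit]
  linarith

lemma sq_pi_le_sq_mul_integral_norm_sq_dbar_div {a b : ℝ} (hb : 2 ≤ b ^ 2) (hZ : ContDiff ℝ 2 Z)
    (h0 : ∀ p, Z p ≠ 0) (hdbar : ∀ p, ⟪Z p, dbar Z p⟫_ℂ = 0) (hper : Periodic Z (1, 0))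
    (hanti : Antiperiodic Z (a, b)) :
    π ^ 2 ≤ b ^ 2 * ∫ p, ‖dbar Z p‖ ^ 2 / ‖Z p‖ ^ 2 ∂cellMeasure (1, 0) (a, b) := by
  have hb0 : b ≠ 0 := by
    rintro rfl
    norm_num at hb
  have hH := continuous_horizontalPart_fderiv (hZ.of_le one_le_two) h0
  set H : ℝ × ℝ → ℝ × ℝ → V := fun v p ↦ horizontalPart (Z p) (fderiv ℝ Z p v)
  set X := H (1, 0)
  set Y := H (0, 1)
  have hint {g : ℝ × ℝ → ℝ} (hg : Continuous g) : Integrable g (cellMeasure (1, 0) (a, b)) :=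
    integrable_cellMeasure hg _ _
  -- Shear the cell so that the cross term of the energy becomes nonpositive.
  obtain ⟨n, hn, hcross⟩ := exists_int_abs_add_le_one_mul_nonpos a
    (b * ∫ p, (⟪X p, Y p⟫_ℂ).re ∂cellMeasure (1, 0) (a, b))
  have henergy := sq_pi_le_integral_norm_sq_horizontalPart_add_smul hZ h0 hper hanti n
    (integral_connectionForm_eq_zero hZ h0 hdbar hper hanti (surjective_smul_add_smul a hb0) _)
  have him : ∫ p, (⟪X p, Y p⟫_ℂ).im ∂cellMeasure (1, 0) (a, b) = 0 :=
    integral_im_inner_horizontalPart_eq_zero hZ h0 hper hanti (surjective_smul_add_smul a hb0) _ _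
  have hD := continuous_norm_sq_dbar_div_norm_sq (hZ.of_le one_le_two) h0
  calc π ^ 2 ≤ ∫ p, (‖H ((a, b) + (n : ℝ) • (1, 0)) p‖ ^ 2 + ‖X p‖ ^ 2)
        ∂cellMeasure (1, 0) (a, b) := henergy
    _ ≤ ∫ p, (b ^ 2 * (‖dbar Z p‖ ^ 2 / ‖Z p‖ ^ 2) + 2 * b ^ 2 * (⟪X p, Y p⟫_ℂ).im +
          2 * (a + n) * b * (⟪X p, Y p⟫_ℂ).re) ∂cellMeasure (1, 0) (a, b) := by
      refine integral_mono (hint (by fun_prop)) (hint (by fun_prop)) fun p ↦ ?_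
      simpa [H, X, Y] using norm_sq_horizontalPart_add_norm_sq_horizontalPart_le hn hb (hdbar p)
    _ = b ^ 2 * (∫ p, ‖dbar Z p‖ ^ 2 / ‖Z p‖ ^ 2 ∂cellMeasure (1, 0) (a, b)) +
          2 * ((a + n) * (b * ∫ p, (⟪X p, Y p⟫_ℂ).re ∂cellMeasure (1, 0) (a, b))) := by
      rw [integral_add (hint (by fun_prop)) (hint (by fun_prop)),
        integral_add (hint (by fun_prop)) (hint (by fun_prop)), integral_const_mul,
        integral_const_mul, integral_const_mul, him]
      ring
    _ ≤ b ^ 2 * ∫ p, ‖dbar Z p‖ ^ 2 / ‖Z p‖ ^ 2 ∂cellMeasure (1, 0) (a, b) := by linarith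

end CauchyRiemann

section SubMeanValue

variable {v : ℝ × ℝ → ℝ} {K r : ℝ}

lemma rotation_add_rotation_eq_trace (B : ℝ × ℝ →L[ℝ] ℝ × ℝ →L[ℝ] ℝ) (θ : ℝ) :
    B (Real.cos θ, Real.sin θ) (Real.cos θ, Real.sin θ) +
        B (-Real.sin θ, Real.cos θ) (-Real.sin θ, Real.cos θ) =
      B (1, 0) (1, 0) + B (0, 1) (0, 1) := by
  have hsplit (x y : ℝ) : ((x, y) : ℝ × ℝ) = x • (1, 0) + y • (0, 1) := by simp
  rw [hsplit (Real.cos θ), hsplit (-Real.sin θ)]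
  simp only [map_add, map_smul, add_apply, smul_apply, smul_eq_mul]
  linear_combination (B (1, 0) (1, 0) + B (0, 1) (0, 1)) * Real.sin_sq_add_cos_sq θ

lemma hasDerivAt_radial_fderiv (hv : ContDiff ℝ 2 v) (p n : ℝ × ℝ) (r : ℝ) :
    HasDerivAt (fun r : ℝ ↦ r * fderiv ℝ v (p + r • n) n)
      (fderiv ℝ v (p + r • n) n + r * fderiv ℝ (fderiv ℝ v) (p + r • n) n n) r := by
  have hD : Differentiable ℝ (fderiv ℝ v) :=
    (hv.fderiv_right (m := 1) le_rfl).differentiable one_ne_zero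
  simpa using (hasDerivAt_id' r).fun_mul
    ((hasDerivAt_comp_add_smul hD p n r).clm_apply (hasDerivAt_const r n))

lemma hasDerivAt_tangential_fderiv (hv : ContDiff ℝ 2 v) (p : ℝ × ℝ) (r θ : ℝ) :
    HasDerivAt (fun θ : ℝ ↦ fderiv ℝ v (p + r • (Real.cos θ, Real.sin θ))
        (-Real.sin θ, Real.cos θ))
      (r * fderiv ℝ (fderiv ℝ v) (p + r • (Real.cos θ, Real.sin θ)) (-Real.sin θ, Real.cos θ)
          (-Real.sin θ, Real.cos θ) -
        fderiv ℝ v (p + r • (Real.cos θ, Real.sin θ)) (Real.cos θ, Real.sin θ)) θ := by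
  have hD : Differentiable ℝ (fderiv ℝ v) :=
    (hv.fderiv_right (m := 1) le_rfl).differentiable one_ne_zero
  have hcircle : HasDerivAt (fun θ : ℝ ↦ p + r • (Real.cos θ, Real.sin θ))
      (r • (-Real.sin θ, Real.cos θ)) θ :=
    (((Real.hasDerivAt_cos θ).prodMk (Real.hasDerivAt_sin θ)).const_smul r).const_add p
  have htangent : HasDerivAt (fun θ : ℝ ↦ (-Real.sin θ, Real.cos θ))
      (-(Real.cos θ, Real.sin θ)) θ := by
    simpa using (Real.hasDerivAt_sin θ).neg.prodMk (Real.hasDerivAt_cos θ)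
  refine (((hD _).hasFDerivAt.comp_hasDerivAt θ hcircle).clm_apply htangent).congr_deriv ?_
  rw [map_smul, map_neg, smul_apply, smul_eq_mul, comp_apply, sub_eq_add_neg]

lemma hasDerivAt_integral_circle_radial (hv : ContDiff ℝ 2 v) (p : ℝ × ℝ) (r : ℝ) :
    HasDerivAt
      (fun r : ℝ ↦ ∫ θ in (-π)..π, r * fderiv ℝ v (p + r • (Real.cos θ, Real.sin θ))
        (Real.cos θ, Real.sin θ))
      (r * ∫ θ in (-π)..π, planeLaplacian v (p + r • (Real.cos θ, Real.sin θ))) r := by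
  have hD : Continuous (fderiv ℝ v) := hv.continuous_fderiv two_ne_zero
  have hderiv := hasDerivAt_intervalIntegral_of_continuous
    (f := fun r θ ↦ r * fderiv ℝ v (p + r • (Real.cos θ, Real.sin θ)) (Real.cos θ, Real.sin θ))
    (by fun_prop) (by fun_prop)
    (fun r θ ↦ hasDerivAt_radial_fderiv hv p (Real.cos θ, Real.sin θ) r) (-π) π r
  have htangential := intervalIntegral.integral_eq_sub_of_hasDerivAt (a := -π) (b := π)
    (fun θ _ ↦ hasDerivAt_tangential_fderiv hv p r θ)
    (Continuous.intervalIntegrable (by fun_prop) _ _)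
  simp only [Real.cos_neg, Real.sin_neg, Real.sin_pi, Real.cos_pi, neg_zero, sub_self]
    at htangential
  refine hderiv.congr_deriv ?_
  rw [← add_zero (intervalIntegral _ _ _ _), ← htangential, ← intervalIntegral.integral_add
    (Continuous.intervalIntegrable (by fun_prop) _ _)
    (Continuous.intervalIntegrable (by fun_prop) _ _), ← intervalIntegral.integral_const_mul]
  refine intervalIntegral.integral_congr fun θ _ ↦ ?_
  simp only [planeLaplacian, ← rotation_add_rotation_eq_trace _ θ]
  ring

lemma le_of_forall_hasDerivAt_nonneg {f f' : ℝ → ℝ} (hr : 0 ≤ r) (hf : ∀ s, HasDerivAt f (f' s) s)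
    (hf' : ∀ s ∈ Ioo 0 r, 0 ≤ f' s) : f 0 ≤ f r := by
  refine monotoneOn_of_hasDerivWithinAt_nonneg (convex_Icc 0 r)
    (fun s _ ↦ (hf s).continuousAt.continuousWithinAt) (fun s _ ↦ (hf s).hasDerivWithinAt)
    (fun s hs ↦ hf' s ?_) (left_mem_Icc.2 hr) (right_mem_Icc.2 hr) hr
  rwa [interior_Icc] at hs

lemma two_pi_mul_neg_le_integral_planeLaplacian_circle (hv : ContDiff ℝ 2 v) (p : ℝ × ℝ)
    (hK : ∀ θ, -K ≤ planeLaplacian v (p + r • (Real.cos θ, Real.sin θ))) :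
    2 * π * -K ≤ ∫ θ in (-π)..π, planeLaplacian v (p + r • (Real.cos θ, Real.sin θ)) := by
  calc 2 * π * -K = ∫ _ in (-π)..π, -K := by simp [two_mul]
    _ ≤ _ := intervalIntegral.integral_mono (by linarith [Real.pi_pos])
      (by simp) (Continuous.intervalIntegrable (by unfold planeLaplacian; fun_prop) _ _) hK

lemma two_pi_mul_sub_le_integral_circle (hv : ContDiff ℝ 2 v) (hr : 0 ≤ r) (p : ℝ × ℝ)
    (hK : ∀ s ∈ Ioo 0 r, ∀ θ, -K ≤ planeLaplacian v (p + s • (Real.cos θ, Real.sin θ))) :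
    2 * π * (v p - K * r ^ 2 / 4) ≤ ∫ θ in (-π)..π, v (p + r • (Real.cos θ, Real.sin θ)) := by
  have hD : Continuous (fderiv ℝ v) := hv.continuous_fderiv two_ne_zero
  set n : ℝ → ℝ × ℝ := fun θ ↦ (Real.cos θ, Real.sin θ)
  have hmean (s : ℝ) : HasDerivAt (fun s ↦ ∫ θ in (-π)..π, v (p + s • n θ))
      (∫ θ in (-π)..π, fderiv ℝ v (p + s • n θ) (n θ)) s :=
    hasDerivAt_intervalIntegral_of_continuous (f := fun s θ ↦ v (p + s • n θ))
      (hv.continuous.comp (by fun_prop)) (by fun_prop)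
      (fun s θ ↦ hasDerivAt_comp_add_smul (hv.differentiable two_ne_zero) p (n θ) s) _ _ s
  have hsq (x : ℝ) : HasDerivAt (fun x ↦ x ^ 2) (2 * x) x := by simpa using hasDerivAt_pow 2 x
  have hflux (s : ℝ) (hs : s ∈ Ioo 0 r) :
      -(π * K * s) ≤ ∫ θ in (-π)..π, fderiv ℝ v (p + s • n θ) (n θ) := by
    have hmono := le_of_forall_hasDerivAt_nonneg hs.1.le
      (fun x ↦ (hasDerivAt_integral_circle_radial hv p x).add ((hsq x).const_mul (π * K)))
      (fun x hx ↦ by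
        have hlap := two_pi_mul_neg_le_integral_planeLaplacian_circle hv p
          (hK x ⟨hx.1, hx.2.trans hs.2⟩)
        linarith [mul_le_mul_of_nonneg_left hlap hx.1.le])
    simp only [Pi.add_apply, zero_mul, intervalIntegral.integral_const_mul] at hmono
    refine le_of_mul_le_mul_left ?_ hs.1
    linarith
  have hmono := le_of_forall_hasDerivAt_nonneg hr
    (fun x ↦ (hmean x).add ((hsq x).const_mul (π * K / 2)))
    (fun x hx ↦ by linarith [hflux x hx])
  simp only [Pi.add_apply, zero_smul, add_zero, intervalIntegral.integral_const, sub_neg_eq_add,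
    smul_eq_mul, ne_eq, OfNat.ofNat_ne_zero, not_false_eq_true, zero_pow, mul_zero] at hmono
  linarith

end SubMeanValue

section ZeroSet

lemma integrable_log_add {α : Type*} [MeasurableSpace α] {μ : Measure α} [IsFiniteMeasure μ]
    {g : α → ℝ} (hg : Integrable g μ) (hg0 : ∀ x, 0 ≤ g x) {δ : ℝ} (hδ : 0 < δ) :
    Integrable (fun x ↦ Real.log (g x + δ)) μ := by
  refine ((hg.add (integrable_const δ)).add (integrable_const |Real.log δ|)).mono'
    (Real.measurable_log.comp_aemeasurable
      (hg.aemeasurable.add_const δ)).aestronglyMeasurable (ae_of_all _ fun x ↦ ?_)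
  have hlower : Real.log δ ≤ Real.log (g x + δ) := Real.log_le_log hδ (by linarith [hg0 x])
  have hupper : Real.log (g x + δ) ≤ g x + δ := Real.log_le_self (by linarith [hg0 x])
  rw [Real.norm_eq_abs, abs_le]
  constructor
  · simp only [Pi.add_apply]
    linarith [neg_abs_le (Real.log δ), hg0 x]
  · simp only [Pi.add_apply]
    linarith [abs_nonneg (Real.log δ)]

lemma measure_eq_zero_of_forall_le_integral_log_add {α : Type*} [MeasurableSpace α]
    {μ : Measure α} [IsFiniteMeasure μ] {g : α → ℝ} (hgm : Measurable g) (hg : Integrable g μ)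
    (hg0 : ∀ x, 0 ≤ g x) {C : ℝ}
    (h : ∀ δ, 0 < δ → δ ≤ 1 → C ≤ ∫ x, Real.log (g x + δ) ∂μ) : μ {x | g x = 0} = 0 := by
  set S := {x | g x = 0}
  have hS : MeasurableSet S := hgm (measurableSet_singleton 0)
  have hbound (δ : ℝ) (hδ : 0 < δ) (hδ1 : δ ≤ 1) :
      C ≤ μ.real S * Real.log δ + ∫ x, (g x + 1) ∂μ := by
    have hind : Integrable (S.indicator fun _ ↦ Real.log δ) μ := (integrable_const _).indicator hS
    have hadd : Integrable (fun x ↦ g x + 1) μ := hg.add (integrable_const 1)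
    calc C ≤ ∫ x, Real.log (g x + δ) ∂μ := h δ hδ hδ1
      _ ≤ ∫ x, (S.indicator (fun _ ↦ Real.log δ) x + (g x + 1)) ∂μ := by
        refine integral_mono (integrable_log_add hg hg0 hδ) (hind.add hadd) fun x ↦ ?_
        by_cases hx : x ∈ S
        · have hgx : g x = 0 := hx
          simp [hx, hgx]
        · rw [indicator_of_notMem hx, zero_add]
          linarith [Real.log_le_self (x := g x + δ) (by linarith [hg0 x])]
      _ = μ.real S * Real.log δ + ∫ x, (g x + 1) ∂μ := by
        rw [integral_add hind hadd, integral_indicator_const _ hS,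
          smul_eq_mul]
  by_contra hne
  have hpos : 0 < μ.real S := ENNReal.toReal_pos hne (measure_ne_top μ S)
  have hlim : Tendsto (fun δ ↦ μ.real S * Real.log δ + ∫ x, (g x + 1) ∂μ) (𝓝[>] 0) atBot :=
    tendsto_atBot_add_const_right _ _
      (Real.tendsto_log_nhdsGT_zero.const_mul_atBot hpos)
  obtain ⟨δ, hδC, hδ0, hδ1⟩ :=
    ((hlim.eventually_lt_atBot C).and (Ioc_mem_nhdsGT (zero_lt_one (α := ℝ)))).exists
  exact (hbound δ hδ0 hδ1).not_gt hδC

lemma volume_eq_zero_of_forall_circle {S : Set (ℝ × ℝ)} (hS : MeasurableSet S) (p : ℝ × ℝ)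
    (h : ∀ r : ℝ, 0 < r →
      volume.restrict (Ioc (-π) π) {θ | p + r • (Real.cos θ, Real.sin θ) ∈ S} = 0) :
    volume S = 0 := by
  rw [← measure_preimage_add volume p S]
  have hS' : MeasurableSet ((p + ·) ⁻¹' S) := measurable_const_add p hS
  have hmeas : Measurable fun q : ℝ × ℝ ↦
      ENNReal.ofReal q.1 • ((p + ·) ⁻¹' S).indicator (1 : ℝ × ℝ → ENNReal) (polarCoord.symm q) :=
    (ENNReal.measurable_ofReal.comp measurable_fst).mul
      ((measurable_one.indicator hS').comp continuous_polarCoord_symm.measurable)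
  rw [← lintegral_indicator_one hS', ← lintegral_comp_polarCoord_symm, polarCoord_target,
    Measure.volume_eq_prod, ← Measure.prod_restrict, lintegral_prod _ hmeas.aemeasurable]
  refine (setLIntegral_congr_fun measurableSet_Ioi fun r hr ↦ ?_).trans lintegral_zero
  rw [restrict_Ioo_eq_restrict_Ioc]
  refine lintegral_eq_zero_of_ae_eq_zero ?_
  filter_upwards [measure_eq_zero_iff_ae_notMem.1 (h r hr)] with θ hθ
  have hθ' : polarCoord.symm (r, θ) ∉ (p + ·) ⁻¹' S := by simpa using hθ
  simp only [indicator_of_notMem hθ', smul_zero, Pi.zero_apply]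

lemma volume_zeroSet_eq_zero_of_le_planeLaplacian_log_add {ρ k : ℝ × ℝ → ℝ}
    (hρ : ContDiff ℝ 2 ρ) (hρ0 : ∀ p, 0 ≤ ρ p) {p : ℝ × ℝ} (hp : ρ p ≠ 0) (hk : Continuous k)
    (hlap : ∀ δ, 0 < δ → δ ≤ 1 → ∀ q, -k q ≤ planeLaplacian (fun q ↦ Real.log (ρ q + δ)) q) :
    volume {q | ρ q = 0} = 0 := by
  refine volume_eq_zero_of_forall_circle
    (hρ.continuous.measurable (measurableSet_singleton 0)) p fun r hr ↦ ?_
  have hcircle : Continuous fun θ ↦ ρ (p + r • (Real.cos θ, Real.sin θ)) :=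
    hρ.continuous.comp (by fun_prop)
  obtain ⟨K, hK⟩ := (isCompact_closedBall p r).bddAbove_image hk.continuousOn
  have hball (s : ℝ) (hs : s ∈ Ioo 0 r) (θ : ℝ) :
      p + s • (Real.cos θ, Real.sin θ) ∈ Metric.closedBall p r := by
    have hnorm : ‖(Real.cos θ, Real.sin θ)‖ ≤ 1 :=
      max_le (Real.abs_cos_le_one θ) (Real.abs_sin_le_one θ)
    rw [mem_closedBall_iff_norm, add_sub_cancel_left, norm_smul, Real.norm_of_nonneg hs.1.le]
    exact (mul_le_of_le_one_right hs.1.le hnorm).trans hs.2.le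
  refine measure_eq_zero_of_forall_le_integral_log_add
    (C := 2 * π * (Real.log (ρ p) - K * r ^ 2 / 4)) hcircle.measurable
    (hcircle.integrableOn_Ioc) (fun θ ↦ hρ0 _) fun δ hδ hδ1 ↦ ?_
  have hlog : ContDiff ℝ 2 fun q ↦ Real.log (ρ q + δ) :=
    (hρ.add contDiff_const).log fun q ↦ (add_pos_of_nonneg_of_pos (hρ0 q) hδ).ne'
  have hmean := two_pi_mul_sub_le_integral_circle hlog hr.le p fun s hs θ ↦
    (neg_le_neg (hK (mem_image_of_mem k (hball s hs θ)))).trans (hlap δ hδ hδ1 _)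
  rw [← intervalIntegral.integral_of_le (by linarith [Real.pi_pos])]
  refine le_trans ?_ hmean
  have hmono : Real.log (ρ p) ≤ Real.log (ρ p + δ) :=
    Real.log_le_log ((hρ0 p).lt_of_ne' hp) (by linarith)
  gcongr

end ZeroSet

section Spinors

/-- The flat Dirac operator `(φ₁, φ₂) ↦ ((∂ₓ - i∂_y)φ₂, -(∂ₓ + i∂_y)φ₁)`. -/
noncomputable def diracOp (φ : ℝ × ℝ → ℂ × ℂ) (p : ℝ × ℝ) : ℂ × ℂ :=
  (dX (fun q ↦ (φ q).2) p - Complex.I * dY (fun q ↦ (φ q).2) p,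
    -(dX (fun q ↦ (φ q).1) p + Complex.I * dY (fun q ↦ (φ q).1) p))

/-- The squared Hermitian norm of a spinor value, as opposed to the sup norm carried by `ℂ × ℂ`. -/
noncomputable def spinorNormSq (z : ℂ × ℂ) : ℝ := ‖z.1‖ ^ 2 + ‖z.2‖ ^ 2

/-- The map to `ℂ⁴` built from two spinors. Conjugating the second components turns `diracOp` into
`dbar`, and makes the image of a pair of eigenspinors orthogonal to its `dbar`. -/
noncomputable def spinorPair (φ χ : ℝ × ℝ → ℂ × ℂ) (p : ℝ × ℝ) : EuclideanSpace ℂ (Fin 4) :=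
  !₂[(φ p).1, conj (φ p).2, (χ p).1, conj (χ p).2]

/-- An eigenspinor of the flat Dirac operator for the eigenvalue `k`, of constant squared norm `δ`.
It changes sign under translations by `π / k` in the second coordinate. -/
noncomputable def planeWave (δ k : ℝ) (p : ℝ × ℝ) : ℂ × ℂ :=
  ((√δ * Real.cos (k * p.2) : ℝ), Complex.I * (√δ * Real.sin (k * p.2) : ℝ))

lemma spinorNormSq_nonneg (z : ℂ × ℂ) : 0 ≤ spinorNormSq z := by
  unfold spinorNormSq
  positivity

lemma spinorNormSq_ne_zero {z : ℂ × ℂ} (hz : z ≠ 0) : spinorNormSq z ≠ 0 := by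
  contrapose! hz
  obtain ⟨h₁, h₂⟩ := (add_eq_zero_iff_of_nonneg (sq_nonneg _) (sq_nonneg _)).1 hz
  exact Prod.ext (by simpa using h₁) (by simpa using h₂)

lemma contDiff_spinorNormSq {φ : ℝ × ℝ → ℂ × ℂ} {n : WithTop ℕ∞} (hφ : ContDiff ℝ n φ) :
    ContDiff ℝ n fun p ↦ spinorNormSq (φ p) :=
  (hφ.fst.norm_sq ℂ).add (hφ.snd.norm_sq ℂ)

lemma contDiff_spinorPair {φ χ : ℝ × ℝ → ℂ × ℂ} {n : WithTop ℕ∞} (hφ : ContDiff ℝ n φ)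
    (hχ : ContDiff ℝ n χ) : ContDiff ℝ n (spinorPair φ χ) := by
  refine (contDiff_piLp 2).2 fun i ↦ ?_
  fin_cases i
  exacts [hφ.fst, Complex.conjCLE.contDiff.comp hφ.snd, hχ.fst,
    Complex.conjCLE.contDiff.comp hχ.snd]

lemma norm_sq_spinorPair (φ χ : ℝ × ℝ → ℂ × ℂ) (p : ℝ × ℝ) :
    ‖spinorPair φ χ p‖ ^ 2 = spinorNormSq (φ p) + spinorNormSq (χ p) := by
  simp [EuclideanSpace.norm_sq_eq, Fin.sum_univ_four, spinorPair, spinorNormSq, add_assoc]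

lemma dbar_apply {ι : Type*} [Fintype ι] {Z : ℝ × ℝ → EuclideanSpace ℂ ι}
    (hZ : Differentiable ℝ Z) (p : ℝ × ℝ) (i : ι) :
    dbar Z p i = dbar (fun q ↦ Z q i) p := by
  have hfd (v : ℝ × ℝ) : fderiv ℝ (fun q ↦ Z q i) p v = fderiv ℝ Z p v i := by
    have hproj := (PiLp.proj (𝕜 := ℝ) 2 (fun _ ↦ ℂ) i).hasFDerivAt (x := Z p)
    exact congr($((hproj.comp p (hZ p).hasFDerivAt).fderiv) v)
  simp [dbar, hfd]

lemma dbar_conj {g : ℝ × ℝ → ℂ} (hg : Differentiable ℝ g) (p : ℝ × ℝ) :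
    dbar (fun q ↦ conj (g q)) p = conj (dX g p - Complex.I * dY g p) := by
  have hfd (v : ℝ × ℝ) : fderiv ℝ (fun q ↦ conj (g q)) p v = conj (fderiv ℝ g p v) :=
    congr($((Complex.conjCLE.hasFDerivAt.comp p (hg p).hasFDerivAt).fderiv) v)
  simp [dbar, dX, dY, hfd]

lemma dbar_spinorPair {φ χ : ℝ × ℝ → ℂ × ℂ} (hφ : Differentiable ℝ φ) (hχ : Differentiable ℝ χ)
    (p : ℝ × ℝ) :
    dbar (spinorPair φ χ) p = !₂[-(diracOp φ p).2, conj (diracOp φ p).1,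
      -(diracOp χ p).2, conj (diracOp χ p).1] := by
  have hdiff : Differentiable ℝ (spinorPair φ χ) := by
    refine (differentiable_piLp 2).2 fun i ↦ ?_
    fin_cases i
    exacts [hφ.fst, Complex.conjCLE.differentiable.comp hφ.snd, hχ.fst,
      Complex.conjCLE.differentiable.comp hχ.snd]
  ext i
  rw [dbar_apply hdiff]
  fin_cases i
  · exact (neg_neg _).symm
  · exact dbar_conj hφ.snd p
  · exact (neg_neg _).symm
  · exact dbar_conj hχ.snd p

section Eigenspinors

variable {φ χ : ℝ × ℝ → ℂ × ℂ} {f h : ℝ} {p : ℝ × ℝ}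

lemma dbar_spinorPair_of_diracOp_eq_smul (hφ : Differentiable ℝ φ) (hχ : Differentiable ℝ χ)
    (hφp : diracOp φ p = f • φ p) (hχp : diracOp χ p = h • χ p) :
    dbar (spinorPair φ χ) p =
      !₂[-(f * (φ p).2), f * conj (φ p).1, -(h * (χ p).2), h * conj (χ p).1] := by
  simp [dbar_spinorPair hφ hχ, hφp, hχp]

lemma inner_spinorPair_dbar_eq_zero (hφ : Differentiable ℝ φ) (hχ : Differentiable ℝ χ)
    (hφp : diracOp φ p = f • φ p) (hχp : diracOp χ p = h • χ p) :
    ⟪spinorPair φ χ p, dbar (spinorPair φ χ) p⟫_ℂ = 0 := by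
  rw [dbar_spinorPair_of_diracOp_eq_smul hφ hχ hφp hχp]
  simp only [spinorPair, PiLp.inner_apply, Fin.sum_univ_four, RCLike.inner_apply,
    Matrix.cons_val, neg_mul, starRingEnd_self_apply]
  ring

lemma norm_sq_dbar_spinorPair (hφ : Differentiable ℝ φ) (hχ : Differentiable ℝ χ)
    (hφp : diracOp φ p = f • φ p) (hχp : diracOp χ p = h • χ p) :
    ‖dbar (spinorPair φ χ) p‖ ^ 2 =
      f ^ 2 * spinorNormSq (φ p) + h ^ 2 * spinorNormSq (χ p) := by
  rw [dbar_spinorPair_of_diracOp_eq_smul hφ hχ hφp hχp]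
  simp only [EuclideanSpace.norm_sq_eq, Fin.sum_univ_four, Matrix.cons_val, norm_neg,
    Complex.norm_mul, Complex.norm_real, Real.norm_eq_abs, mul_pow, sq_abs, RCLike.norm_conj,
    spinorNormSq]
  ring

end Eigenspinors

lemma contDiff_planeWave (δ k : ℝ) {n : WithTop ℕ∞} : ContDiff ℝ n (planeWave δ k) := by
  have hcos : ContDiff ℝ n fun p : ℝ × ℝ ↦ √δ * Real.cos (k * p.2) := by fun_prop
  have hsin : ContDiff ℝ n fun p : ℝ × ℝ ↦ √δ * Real.sin (k * p.2) := by fun_prop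
  exact (Complex.ofRealCLM.contDiff.comp hcos).prodMk
    (contDiff_const.mul (Complex.ofRealCLM.contDiff.comp hsin))

lemma spinorNormSq_planeWave {δ : ℝ} (hδ : 0 ≤ δ) (k : ℝ) (p : ℝ × ℝ) :
    spinorNormSq (planeWave δ k p) = δ := by
  simp only [spinorNormSq, planeWave, norm_mul, Complex.norm_I, one_mul, Complex.norm_real,
    Real.norm_eq_abs, mul_pow, sq_abs]
  rw [Real.sq_sqrt hδ, ← mul_add, Real.cos_sq_add_sin_sq, mul_one]

lemma fderiv_comp_snd {g : ℝ → ℂ} {g' : ℂ} {p : ℝ × ℝ} (hg : HasDerivAt g g' p.2) (v : ℝ × ℝ) :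
    fderiv ℝ (fun q : ℝ × ℝ ↦ g q.2) p v = v.2 • g' :=
  congr($((hg.hasFDerivAt.comp p hasFDerivAt_snd).fderiv) v)

lemma diracOp_planeWave (δ k : ℝ) (p : ℝ × ℝ) :
    diracOp (planeWave δ k) p = k • planeWave δ k p := by
  have hlin : HasDerivAt (fun y ↦ k * y) k p.2 := by simpa using (hasDerivAt_id p.2).const_mul k
  have hcos := (hlin.cos.const_mul √δ).ofReal_comp
  have hsin := ((hlin.sin.const_mul √δ).ofReal_comp).const_mul Complex.I
  ext
  · simp only [diracOp, dX, dY, planeWave, fderiv_comp_snd hsin, zero_smul, one_smul, zero_sub,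
      Prod.smul_mk, Complex.real_smul]
    push_cast
    linear_combination (-√δ * Complex.cos (k * p.2) * k) * Complex.I_mul_I
  · simp only [diracOp, dX, dY, planeWave, fderiv_comp_snd hcos, zero_smul, one_smul, zero_add,
      Prod.smul_mk, Complex.real_smul]
    push_cast
    ring

lemma periodic_planeWave (δ k : ℝ) : Periodic (planeWave δ k) (1, 0) := fun p ↦ by
  simp [planeWave]

lemma antiperiodic_planeWave (δ a : ℝ) {b : ℝ} (hb : b ≠ 0) :
    Antiperiodic (planeWave δ (π / b)) (a, b) := fun p ↦ by
  have hshift : π / b * (p.2 + b) = π / b * p.2 + π := by field_simp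
  simp [planeWave, hshift]

lemma periodic_spinorPair {φ χ : ℝ × ℝ → ℂ × ℂ} {v : ℝ × ℝ} (hφ : Periodic φ v)
    (hχ : Periodic χ v) : Periodic (spinorPair φ χ) v := fun p ↦ by
  simp only [spinorPair, hφ p, hχ p]

lemma antiperiodic_spinorPair {φ χ : ℝ × ℝ → ℂ × ℂ} {v : ℝ × ℝ} (hφ : Antiperiodic φ v)
    (hχ : Antiperiodic χ v) : Antiperiodic (spinorPair φ χ) v := fun p ↦ by
  ext i
  fin_cases i <;> simp [spinorPair, hφ p, hχ p]

end Spinors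

section Eigenvalue

variable {φ : ℝ × ℝ → ℂ × ℂ} {f : ℝ × ℝ → ℝ} {a b : ℝ}

/-- The quotient `‖dbar Z‖² / ‖Z‖²` for the spinor pair `Z` formed by a solution `φ` of `Dφ = fφ`
and the plane wave of squared norm `δ` and eigenvalue `k`. -/
noncomputable def pairEnergy (φ : ℝ × ℝ → ℂ × ℂ) (f : ℝ × ℝ → ℝ) (k δ : ℝ) (p : ℝ × ℝ) : ℝ :=
  (f p ^ 2 * spinorNormSq (φ p) + k ^ 2 * δ) / (spinorNormSq (φ p) + δ)

lemma norm_sq_spinorPair_planeWave {δ : ℝ} (hδ : 0 ≤ δ) (k : ℝ) (p : ℝ × ℝ) :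
    ‖spinorPair φ (planeWave δ k) p‖ ^ 2 = spinorNormSq (φ p) + δ := by
  rw [norm_sq_spinorPair, spinorNormSq_planeWave hδ]

lemma spinorPair_planeWave_ne_zero {δ : ℝ} (hδ : 0 < δ) (k : ℝ) (p : ℝ × ℝ) :
    spinorPair φ (planeWave δ k) p ≠ 0 := by
  have hpos : 0 < ‖spinorPair φ (planeWave δ k) p‖ ^ 2 := by
    rw [norm_sq_spinorPair_planeWave hδ.le]
    linarith [spinorNormSq_nonneg (φ p)]
  exact fun h ↦ by simp [h] at hpos

lemma norm_sq_dbar_div_norm_sq_spinorPair_planeWave (hφ : Differentiable ℝ φ)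
    (hD : ∀ p, diracOp φ p = f p • φ p) {δ : ℝ} (hδ : 0 ≤ δ) (k : ℝ) (p : ℝ × ℝ) :
    ‖dbar (spinorPair φ (planeWave δ k)) p‖ ^ 2 / ‖spinorPair φ (planeWave δ k) p‖ ^ 2 =
      pairEnergy φ f k δ p := by
  rw [norm_sq_dbar_spinorPair hφ ((contDiff_planeWave δ k (n := 1)).differentiable one_ne_zero)
    (hD p) (diracOp_planeWave δ k p), norm_sq_spinorPair_planeWave hδ,
    spinorNormSq_planeWave hδ, pairEnergy]

lemma sq_pi_le_sq_mul_integral_pairEnergy (hb : 2 ≤ b ^ 2) (hφ : ContDiff ℝ 2 φ)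
    (hper : Periodic φ (1, 0)) (hanti : Antiperiodic φ (a, b))
    (hD : ∀ p, diracOp φ p = f p • φ p) {δ : ℝ} (hδ : 0 < δ) :
    π ^ 2 ≤ b ^ 2 * ∫ p, pairEnergy φ f (π / b) δ p ∂cellMeasure (1, 0) (a, b) := by
  have hb0 : b ≠ 0 := by rintro rfl; norm_num at hb
  have hφd : Differentiable ℝ φ := hφ.differentiable two_ne_zero
  have hwave : ContDiff ℝ 2 (planeWave δ (π / b)) := contDiff_planeWave _ _
  have h := sq_pi_le_sq_mul_integral_norm_sq_dbar_div hb (contDiff_spinorPair hφ hwave)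
    (spinorPair_planeWave_ne_zero hδ _)
    (fun p ↦ inner_spinorPair_dbar_eq_zero hφd (hwave.differentiable two_ne_zero) (hD p)
      (diracOp_planeWave _ _ p))
    (periodic_spinorPair hper (periodic_planeWave _ _))
    (antiperiodic_spinorPair hanti (antiperiodic_planeWave _ _ hb0))
  simpa only [norm_sq_dbar_div_norm_sq_spinorPair_planeWave hφd hD hδ.le] using h

lemma neg_pairEnergy_le_planeLaplacian_log (hφ : ContDiff ℝ 2 φ)
    (hD : ∀ p, diracOp φ p = f p • φ p) {δ : ℝ} (hδ : 0 < δ) (k : ℝ) (p : ℝ × ℝ) :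
    -pairEnergy φ f k δ p ≤ planeLaplacian (fun q ↦ Real.log (spinorNormSq (φ q) + δ)) p := by
  have hφd : Differentiable ℝ φ := hφ.differentiable two_ne_zero
  have hwave : ContDiff ℝ 2 (planeWave δ k) := contDiff_planeWave _ _
  have h := neg_norm_sq_dbar_div_norm_sq_le_planeLaplacian (contDiff_spinorPair hφ hwave)
    (spinorPair_planeWave_ne_zero hδ _)
    (fun p ↦ inner_spinorPair_dbar_eq_zero hφd (hwave.differentiable two_ne_zero) (hD p)
      (diracOp_planeWave _ _ p)) p
  rw [norm_sq_dbar_div_norm_sq_spinorPair_planeWave hφd hD hδ.le] at h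
  simpa only [norm_sq_spinorPair_planeWave hδ.le] using h

lemma pairEnergy_nonneg {δ : ℝ} (hδ : 0 ≤ δ) (k : ℝ) (p : ℝ × ℝ) : 0 ≤ pairEnergy φ f k δ p := by
  have := spinorNormSq_nonneg (φ p)
  unfold pairEnergy
  positivity

lemma pairEnergy_le {δ : ℝ} (hδ : 0 < δ) (k : ℝ) (p : ℝ × ℝ) :
    pairEnergy φ f k δ p ≤ f p ^ 2 + k ^ 2 := by
  have hφp := spinorNormSq_nonneg (φ p)
  rw [pairEnergy, div_le_iff₀ (by positivity)]
  nlinarith [mul_nonneg (sq_nonneg k) hφp, mul_nonneg (sq_nonneg (f p)) hδ.le]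

lemma continuous_pairEnergy (hφ : Continuous φ) (hf : Continuous f) {δ : ℝ} (hδ : 0 < δ) (k : ℝ) :
    Continuous (pairEnergy φ f k δ) := by
  have hρ : Continuous fun p ↦ spinorNormSq (φ p) := by
    unfold spinorNormSq
    fun_prop
  exact ((by fun_prop : Continuous _).mul hρ |>.add continuous_const).div (hρ.add continuous_const)
    fun p ↦ (add_pos_of_nonneg_of_pos (spinorNormSq_nonneg _) hδ).ne'

lemma tendsto_pairEnergy {p : ℝ × ℝ} (hp : spinorNormSq (φ p) ≠ 0) (k : ℝ) :
    Tendsto (fun δ ↦ pairEnergy φ f k δ p) (𝓝[>] 0) (𝓝 (f p ^ 2)) := by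
  have hcont : ContinuousAt (fun δ ↦ pairEnergy φ f k δ p) 0 := by
    unfold pairEnergy
    exact ContinuousAt.div (by fun_prop) (by fun_prop) (by simpa using hp)
  have hzero : pairEnergy φ f k 0 p = f p ^ 2 := by
    simp [pairEnergy, hp]
  exact hzero ▸ hcont.tendsto.mono_left nhdsWithin_le_nhds

lemma volume_spinorNormSq_eq_zero (hφ : ContDiff ℝ 2 φ) (hφ0 : φ ≠ 0) (hf : Continuous f)
    (hD : ∀ p, diracOp φ p = f p • φ p) : volume {p | spinorNormSq (φ p) = 0} = 0 := by
  obtain ⟨p, hp⟩ := Function.ne_iff.1 hφ0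
  refine volume_zeroSet_eq_zero_of_le_planeLaplacian_log_add (k := fun p ↦ f p ^ 2 + 0 ^ 2)
    (contDiff_spinorNormSq hφ) (fun p ↦ spinorNormSq_nonneg _) (spinorNormSq_ne_zero hp)
    (by fun_prop) fun δ hδ _ q ↦ ?_
  exact (neg_le_neg (pairEnergy_le hδ 0 q)).trans
    (neg_pairEnergy_le_planeLaplacian_log hφ hD hδ 0 q)

lemma tendsto_integral_pairEnergy (hb : b ≠ 0) (hφ : ContDiff ℝ 2 φ) (hφ0 : φ ≠ 0)
    (hf : Continuous f) (hD : ∀ p, diracOp φ p = f p • φ p) (k : ℝ) :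
    Tendsto (fun δ ↦ ∫ p, pairEnergy φ f k δ p ∂cellMeasure (1, 0) (a, b)) (𝓝[>] 0)
      (𝓝 (∫ p, f p ^ 2 ∂cellMeasure (1, 0) (a, b))) := by
  have hnull : ∀ᵐ p ∂cellMeasure (1, 0) (a, b), spinorNormSq (φ p) ≠ 0 :=
    (cellMeasure_absolutelyContinuous volume (surjective_smul_add_smul a hb)).ae_le
      (measure_eq_zero_iff_ae_notMem.1 (volume_spinorNormSq_eq_zero hφ hφ0 hf hD))
  refine tendsto_integral_filter_of_dominated_convergence (fun p ↦ f p ^ 2 + k ^ 2) ?_ ?_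
    (integrable_cellMeasure (by fun_prop) _ _) (hnull.mono fun p hp ↦ tendsto_pairEnergy hp k)
  · filter_upwards [self_mem_nhdsWithin] with δ hδ
    exact (continuous_pairEnergy hφ.continuous hf hδ k).aestronglyMeasurable
  · filter_upwards [self_mem_nhdsWithin] with δ hδ
    refine Eventually.of_forall fun p ↦ ?_
    rw [Real.norm_of_nonneg (pairEnergy_nonneg (le_of_lt hδ) k p)]
    exact pairEnergy_le hδ k p

lemma sq_pi_le_sq_mul_integral_sq_of_diracOp_eq_smul (hb : 2 ≤ b ^ 2) (hφ : ContDiff ℝ 2 φ)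
    (hφ0 : φ ≠ 0) (hper : Periodic φ (1, 0)) (hanti : Antiperiodic φ (a, b)) (hf : Continuous f)
    (hD : ∀ p, diracOp φ p = f p • φ p) :
    π ^ 2 ≤ b ^ 2 * ∫ p, f p ^ 2 ∂cellMeasure (1, 0) (a, b) := by
  have hb0 : b ≠ 0 := by rintro rfl; norm_num at hb
  refine ge_of_tendsto ((tendsto_integral_pairEnergy hb0 hφ hφ0 hf hD (π / b)).const_mul _) ?_
  filter_upwards [self_mem_nhdsWithin] with δ hδ
  exact sq_pi_le_sq_mul_integral_pairEnergy hb hφ hper hanti hD hδ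

end Eigenvalue

theorem dirac_first_eigenvalue_flat_torus_nontrivial_spin_lower_bound_general
    (a b lam : ℝ) (hb : √2 ≤ b) (ω : ℝ × ℝ → ℝ) (hω : Continuous ω)
    (φ : ℝ × ℝ → ℂ × ℂ) (hφ : ContDiff ℝ 2 φ) (hφ0 : φ ≠ 0)
    (hφ1 : ∀ p : ℝ × ℝ, φ (p.1 + 1, p.2) = φ p)
    (hφ2 : ∀ p : ℝ × ℝ, φ (p.1 + a, p.2 + b) = -φ p)
    (heq1 : ∀ p : ℝ × ℝ,
      dX (fun q => (φ q).2) p - Complex.I * dY (fun q => (φ q).2) p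
        = (lam : ℂ) * Real.exp (ω p) * (φ p).1)
    (heq2 : ∀ p : ℝ × ℝ,
      -(dX (fun q => (φ q).1) p + Complex.I * dY (fun q => (φ q).1) p)
        = (lam : ℂ) * Real.exp (ω p) * (φ p).2) :
    lam ^ 2 * b *
      (∫ t in (0:ℝ)..1, ∫ s in (0:ℝ)..1, Real.exp (2 * ω (s + t * a, t * b)))
      ≥ Real.pi ^ 2 / b := by
  have hb0 : 0 < b := (Real.sqrt_pos.2 two_pos).trans_le hb
  have hD (p : ℝ × ℝ) : diracOp φ p = (lam * Real.exp (ω p)) • φ p := by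
    simp [diracOp, heq1, heq2, Prod.ext_iff]
  have hbound := sq_pi_le_sq_mul_integral_sq_of_diracOp_eq_smul ((Real.sqrt_le_left hb0.le).1 hb)
    hφ hφ0 (fun p ↦ by rw [← hφ1 p]; congr 1; ext <;> simp) hφ2 (by fun_prop) hD
  have harea : ∫ p, (lam * Real.exp (ω p)) ^ 2 ∂cellMeasure (1, 0) (a, b) =
      lam ^ 2 * ∫ t in (0:ℝ)..1, ∫ s in (0:ℝ)..1, Real.exp (2 * ω (s + t * a, t * b)) := by
    simp_rw [mul_pow, ← Real.exp_nat_mul]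
    rw [integral_const_mul, cellMeasure_comm, integral_cellMeasure (by fun_prop)]
    simp [add_comm]
  rw [ge_iff_le, div_le_iff₀ hb0]
  calc π ^ 2 ≤ b ^ 2 * ∫ p, (lam * Real.exp (ω p)) ^ 2 ∂cellMeasure (1, 0) (a, b) := hbound
    _ = _ := by rw [harea]; ring

/-- Theorem 4.4 (lower bound, non-trivial spin structure): for the torus `ℝ²/Γ`,
`Γ = ℤ(1,0) + ℤ(a,b)` with `|a| ≤ 1/2` and `b > π/2`, any positive Dirac eigenvalue `λ` of
the conformal metric `e^{2ω} g_{a,b}` for the non-trivial spin structure (spinors periodic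
in `(1,0)` and anti-periodic in `(a,b)`) satisfies `λ² · Area ≥ π²/b`. -/
theorem dirac_first_eigenvalue_flat_torus_nontrivial_spin_lower_bound
    (a b lam : ℝ) (ha : |a| ≤ 1 / 2) (hb : b > Real.pi / 2)
    (ω : ℝ × ℝ → ℝ) (hω : ContDiff ℝ (⊤ : ℕ∞) ω)
    (hω1 : ∀ p : ℝ × ℝ, ω (p.1 + 1, p.2) = ω p)
    (hω2 : ∀ p : ℝ × ℝ, ω (p.1 + a, p.2 + b) = ω p)
    (hlam : 0 < lam)
    (φ : ℝ × ℝ → ℂ × ℂ) (hφ : ContDiff ℝ (⊤ : ℕ∞) φ) (hφ0 : φ ≠ 0)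
    (hφ1 : ∀ p : ℝ × ℝ, φ (p.1 + 1, p.2) = φ p)
    (hφ2 : ∀ p : ℝ × ℝ, φ (p.1 + a, p.2 + b) = -φ p)
    (heq1 : ∀ p : ℝ × ℝ,
      dX (fun q => (φ q).2) p - Complex.I * dY (fun q => (φ q).2) p
        = (lam : ℂ) * Real.exp (ω p) * (φ p).1)
    (heq2 : ∀ p : ℝ × ℝ,
      -(dX (fun q => (φ q).1) p + Complex.I * dY (fun q => (φ q).1) p)
        = (lam : ℂ) * Real.exp (ω p) * (φ p).2) :
    lam ^ 2 * b *
      (∫ t in (0:ℝ)..1, ∫ s in (0:ℝ)..1, Real.exp (2 * ω (s + t * a, t * b)))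
      ≥ Real.pi ^ 2 / b :=
  dirac_first_eigenvalue_flat_torus_nontrivial_spin_lower_bound_general a b lam
    ((Real.sqrt_le_left (by linarith [Real.pi_pos])).2 (by nlinarith [Real.pi_gt_three]))
    ω hω.continuous φ (contDiff_infty.1 hφ 2) hφ0 hφ1 hφ2 heq1 heq2
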